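/- Let R > 0 be fixed. There exist positive constants A = A(R) and B = B(R) such that for all sufficiently large x and all integers k with 1 ≤ k ≤ R·log log x, one has #{n ≤ x : ω(n²+1) = k} ≤ A·x·(log log x + B)^{k−1} / ((k−1)!·log x). -/

import Mathlib

/-!
Split `n ^ 2 + 1 = a * b`, where `a` collects the primes up to a threshold `z` and `b` the others.
If the part of `n ^ 2 + 1` made of primes up to `exp X`, with `X = log x / 32`, is at most
`exp (8 * X)`, then `b` has boundedly many prime factors. For each `a`, Selberg's sieve bounds the
number of `n ≤ x` for which `(n ^ 2 + 1) / a` is rough by a constant times `x * f a / log x` with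
`f` multiplicative, and the sum of `f a` over the `z`-smooth `a` with `j` prime factors is at most
`(log log x + C) ^ j / j!`, since `∑ p ≤ z, (1 + χ₄ p) / p ≤ log log z + O(1)`.

Otherwise either a large prime power divides `n ^ 2 + 1`, which is rare, or the smooth part passes
`exp (8 * X)` at some prime `p`. In the second case decompose dyadically according to
`log p ≈ X / 2 ^ i`: the sieve, now of level `p`, loses a factor `2 ^ i` and boundedly many powers
of `2 * R`, but Rankin's trick gains `exp (-2 ^ i)` from the size of `a`.
-/

open Finset Real

/-! ### Square roots of `-1` modulo `n` -/

theorem card_filter_Ico_mul_of_periodic {p : ℕ → Prop} [DecidablePred p] {q : ℕ}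
    (hp : Function.Periodic p q) (a m : ℕ) :
    #{n ∈ Ico a (a + q * m) | p n} = m * q.count p := by
  induction m with
  | zero => simp
  | succ m ih =>
    rw [← Ico_union_Ico_eq_Ico (Nat.le_add_right a (q * m)) (by gcongr; omega), filter_union,
      card_union_of_disjoint
        (disjoint_filter_filter (Ico_disjoint_Ico_consecutive _ _ _)), ih,
      show a + q * (m + 1) = a + q * m + q by ring, Nat.filter_Ico_card_eq_of_periodic _ _ _ hp]
    ring

theorem abs_card_filter_Ico_sub_le {p : ℕ → Prop} [DecidablePred p] {q : ℕ} (hq : 0 < q)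
    (hp : Function.Periodic p q) (a N : ℕ) :
    |(#{n ∈ Ico a (a + N) | p n} : ℝ) - N * (q.count p / q)| ≤ q.count p := by
  set c := q.count p
  set b := a + q * (N / q)
  have hbN : a + N = b + N % q := by rw [add_assoc, Nat.div_add_mod]
  have hcard : #{n ∈ Ico a (a + N) | p n} = N / q * c + #{n ∈ Ico b (b + N % q) | p n} := by
    rw [← card_filter_Ico_mul_of_periodic hp a (N / q), hbN,
      ← Ico_union_Ico_eq_Ico (Nat.le_add_right a (q * (N / q))) (Nat.le_add_right b (N % q)),
      filter_union, card_union_of_disjoint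
        (disjoint_filter_filter (Ico_disjoint_Ico_consecutive _ _ _))]
  have hrest : #{n ∈ Ico b (b + N % q) | p n} ≤ c := by
    refine (card_le_card ?_).trans (Nat.filter_Ico_card_eq_of_periodic b q p hp).le
    gcongr
    exact (Nat.mod_lt N hq).le
  have hq' : (0 : ℝ) < q := by exact_mod_cast hq
  have hN : (N : ℝ) * (c / q) = (N / q : ℕ) * c + (N % q : ℕ) * (c / q) := by
    nth_rw 1 [← Nat.div_add_mod N q]
    push_cast
    field_simp [hq'.ne']
  have hmod : ((N % q : ℕ) : ℝ) * (c / q) ≤ c := by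
    have : ((N % q : ℕ) : ℝ) ≤ q := by exact_mod_cast (Nat.mod_lt N hq).le
    calc ((N % q : ℕ) : ℝ) * (c / q) ≤ q * (c / q) := by gcongr
      _ = c := mul_div_cancel₀ _ hq'.ne'
  have hmod0 : 0 ≤ ((N % q : ℕ) : ℝ) * (c / q) := by positivity
  have hrest' : (#{n ∈ Ico b (b + N % q) | p n} : ℝ) ≤ c := by exact_mod_cast hrest
  rw [hcard, hN, abs_le]
  push_cast
  constructor <;> linarith [(#{n ∈ Ico b (b + N % q) | p n}).cast_nonneg (α := ℝ)]

/-- `ρ(n)`, the number of solutions of `r² = -1` in `ℤ/nℤ`; here `ρ(0) = 0`, since `ZMod 0 = ℤ`. -/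
noncomputable def rho (n : ℕ) : ℕ := Nat.card {r : ZMod n // r ^ 2 = -1}

theorem periodic_dvd_sq_add_one (q : ℕ) : Function.Periodic (fun n : ℕ ↦ q ∣ n ^ 2 + 1) q := by
  intro n
  simp only [← ZMod.natCast_eq_zero_iff, Nat.cast_add, Nat.cast_pow, CharP.cast_eq_zero, add_zero]

theorem rho_eq_count {q : ℕ} (hq : 0 < q) : rho q = q.count (fun n ↦ q ∣ n ^ 2 + 1) := by
  have : NeZero q := ⟨hq.ne'⟩
  rw [rho, Nat.subtype_card (univ.filter fun r : ZMod q ↦ r ^ 2 = -1) (by simp),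
    Nat.count_eq_card_filter_range]
  refine card_bij (fun r _ ↦ r.val) (fun r hr ↦ ?_) (fun r _ s _ h ↦ ZMod.val_injective q h)
    fun n hn ↦ ?_
  · simp_all [ZMod.val_lt, ← ZMod.natCast_eq_zero_iff]
  · simp only [mem_filter, mem_range, ← ZMod.natCast_eq_zero_iff] at hn
    push_cast at hn
    exact ⟨n, by simpa using eq_neg_of_add_eq_zero_left hn.2, ZMod.val_cast_of_lt hn.1⟩

theorem abs_card_dvd_sq_add_one_sub_le {q : ℕ} (hq : 0 < q) (N : ℕ) :
    |(#{n ∈ Icc 1 N | q ∣ n ^ 2 + 1} : ℝ) - N * (rho q / q)| ≤ rho q := by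
  rw [rho_eq_count hq, ← Ico_add_one_right_eq_Icc, add_comm N 1]
  exact abs_card_filter_Ico_sub_le hq (periodic_dvd_sq_add_one q) 1 N

theorem rho_le_self {n : ℕ} (hn : 0 < n) : rho n ≤ n :=
  (rho_eq_count hn).trans_le (Nat.count_le _)

theorem rho_one : rho 1 = 1 := by
  rw [rho_eq_count one_pos]
  decide

theorem rho_mul {m n : ℕ} (h : m.Coprime n) : rho (m * n) = rho m * rho n := by
  rw [rho, rho, rho, ← Nat.card_prod]
  refine Nat.card_congr (((ZMod.chineseRemainder h).toEquiv.subtypeEquiv fun r ↦ ?_).trans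
    (Equiv.subtypeProdEquivProd (p := fun r : ZMod m ↦ r ^ 2 = -1)
      (q := fun r : ZMod n ↦ r ^ 2 = -1)))
  rw [← (ZMod.chineseRemainder h).injective.eq_iff, Prod.ext_iff]
  simp

theorem rho_two_pow_le (v : ℕ) : rho (2 ^ v) ≤ 1 := by
  rcases lt_or_ge v 2 with hv | hv
  · interval_cases v <;> rw [rho_eq_count (by norm_num)] <;> decide
  · rw [rho_eq_count (by positivity), Nat.count_eq_card_filter_range, filter_false_of_mem]
    · simp
    · intro r _ hr
      have h4 : 4 ∣ r ^ 2 + 1 := (pow_dvd_pow 2 hv : 2 ^ 2 ∣ 2 ^ v).trans hr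
      have hr4 : r % 4 = 0 ∨ r % 4 = 1 ∨ r % 4 = 2 ∨ r % 4 = 3 := by omega
      have := Nat.mod_eq_zero_of_dvd h4
      rcases hr4 with hr4 | hr4 | hr4 | hr4 <;> simp [Nat.add_mod, Nat.pow_mod, hr4] at this

-- The unit group modulo an odd prime power is cyclic, so `1` has at most two square roots, and two
-- square roots of `-1` differ by a square root of `1`.
theorem rho_odd_prime_pow_le {p : ℕ} (hp : p.Prime) (hp2 : p ≠ 2) (v : ℕ) : rho (p ^ v) ≤ 2 := by
  classical
  have : NeZero (p ^ v) := ⟨(pow_pos hp.pos v).ne'⟩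
  have := ZMod.isCyclic_units_of_prime_pow p hp hp2 v
  have unitOf (r : {r : ZMod (p ^ v) // r ^ 2 = -1}) :
      ∃ u : (ZMod (p ^ v))ˣ, (u : ZMod (p ^ v)) = r :=
    IsUnit.of_mul_eq_one (-r.1) (by linear_combination -r.2)
  choose u hu using unitOf
  rcases isEmpty_or_nonempty {r : ZMod (p ^ v) // r ^ 2 = -1} with hr | ⟨⟨r₀⟩⟩
  · simp [rho]
  have hsq (r) : u r ^ 2 = u r₀ ^ 2 := by
    ext
    simp only [Units.val_pow_eq_pow_val, hu, r.2, r₀.2]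
  rw [rho]
  calc Nat.card {r : ZMod (p ^ v) // r ^ 2 = -1}
      ≤ Nat.card {x : (ZMod (p ^ v))ˣ // x ^ 2 = 1} := by
        refine Nat.card_le_card_of_injective
          (fun r ↦ ⟨u r / u r₀, by rw [div_pow, hsq, div_self']⟩) fun r s hrs ↦ ?_
        have : u r = u s := div_left_injective (congrArg Subtype.val hrs)
        exact Subtype.ext (by rw [← hu, ← hu, this])
    _ ≤ 2 := by
        rw [Nat.subtype_card (univ.filter fun x : (ZMod (p ^ v))ˣ ↦ x ^ 2 = 1) (by simp)]
        exact IsCyclic.card_pow_eq_one_le two_pos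

theorem rho_prime_pow_le {p : ℕ} (hp : p.Prime) (v : ℕ) : rho (p ^ v) ≤ 2 := by
  rcases eq_or_ne p 2 with rfl | hp2
  · exact (rho_two_pow_le v).trans one_le_two
  · exact rho_odd_prime_pow_le hp hp2 v

/-- The nontrivial Dirichlet character modulo `4`, as a real-valued completely multiplicative
function on `ℕ`. -/
noncomputable def chi : ℕ →*₀ ℝ where
  toFun n := (ZMod.χ₄ n : ℤ)
  map_zero' := by simp
  map_one' := by simp
  map_mul' m n := by rw [Nat.cast_mul, map_mul, Int.cast_mul]

theorem chi_apply (n : ℕ) : chi n = (ZMod.χ₄ n : ℤ) := rfl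

theorem chi_of_mod_four_eq_one {n : ℕ} (h : n % 4 = 1) : chi n = 1 := by
  simp [chi_apply, ZMod.χ₄_nat_one_mod_four h]

theorem chi_of_mod_four_eq_three {n : ℕ} (h : n % 4 = 3) : chi n = -1 := by
  simp [chi_apply, ZMod.χ₄_nat_three_mod_four h]

theorem chi_of_even {n : ℕ} (h : n % 2 = 0) : chi n = 0 := by
  rw [chi_apply, ZMod.χ₄_nat_eq_if_mod_four, if_pos h, Int.cast_zero]

theorem chi_eq_one_or_neg_one_or_zero (n : ℕ) : chi n = 1 ∨ chi n = -1 ∨ chi n = 0 := by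
  have : n % 4 = 1 ∨ n % 4 = 3 ∨ n % 2 = 0 := by omega
  exact this.imp chi_of_mod_four_eq_one (Or.imp chi_of_mod_four_eq_three chi_of_even)

theorem abs_chi_le_one (n : ℕ) : |chi n| ≤ 1 := by
  rcases chi_eq_one_or_neg_one_or_zero n with h | h | h <;> simp [h]

theorem rho_prime {p : ℕ} (hp : p.Prime) : (rho p : ℝ) = 1 + chi p := by
  have : Fact p.Prime := ⟨hp⟩
  rcases eq_or_ne p 2 with rfl | hp2
  · rw [chi_of_even rfl, rho_eq_count two_pos, show Nat.count _ 2 = 1 by decide]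
    simp
  · have hcard := legendreSym.card_sqrts p hp2 (-1)
    rw [legendreSym.at_neg_one hp2, Set.toFinset_card, ← Nat.card_eq_fintype_card] at hcard
    rw [rho, chi_apply, add_comm]
    push_cast at hcard
    exact_mod_cast hcard

theorem sum_range_four_mul_succ_chi_mul (c : ℕ → ℝ) (k : ℕ) :
    ∑ n ∈ range (4 * (k + 1)), chi n * c n =
      ∑ n ∈ range (4 * k), chi n * c n + c (4 * k + 1) - c (4 * k + 3) := by
  rw [show 4 * (k + 1) = 4 * k + 1 + 1 + 1 + 1 by ring]
  simp only [sum_range_succ]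
  rw [chi_of_even (n := 4 * k) (by omega), chi_of_mod_four_eq_one (n := 4 * k + 1) (by omega),
    chi_of_even (n := 4 * k + 1 + 1) (by omega),
    chi_of_mod_four_eq_three (n := 4 * k + 1 + 1 + 1) (by omega)]
  ring

theorem sum_range_four_mul_chi_mul_le {c : ℕ → ℝ} (hc : AntitoneOn c (Set.Ici 1)) (k : ℕ) :
    ∑ n ∈ range (4 * k), chi n * c n ≤ c 1 - c (4 * k + 1) := by
  induction k with
  | zero => simp
  | succ k ih =>
    have : c (4 * (k + 1) + 1) ≤ c (4 * k + 3) := hc (by simp) (by simp) (by omega)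
    rw [sum_range_four_mul_succ_chi_mul]
    linarith

theorem le_sum_range_four_mul_chi_mul {c : ℕ → ℝ} (hc : AntitoneOn c (Set.Ici 1)) {k : ℕ}
    (hk : 1 ≤ k) : c 1 - c 3 ≤ ∑ n ∈ range (4 * k), chi n * c n := by
  induction k, hk using Nat.le_induction with
  | base => simp [sum_range_four_mul_succ_chi_mul c 0]
  | succ k _ ih =>
    have : c (4 * k + 3) ≤ c (4 * k + 1) := hc (by simp) (by simp) (by omega)
    rw [sum_range_four_mul_succ_chi_mul]
    linarith

/-! ### Mertens-type sums -/

theorem prime_pow_div_dvd_factorial {p : ℕ} (hp : p.Prime) (n : ℕ) : p ^ (n / p) ∣ n.factorial := by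
  have : p ^ (n / p) ∣ (p * (n / p)).factorial := by
    rw [pow_dvd_iff_le_emultiplicity, hp.emultiplicity_factorial_mul]
    exact le_add_self
  exact this.trans (Nat.factorial_dvd_factorial (Nat.mul_div_le n p))

theorem sum_div_mul_log_le (n : ℕ) :
    ∑ p ∈ Nat.primesLE n, ((n / p : ℕ) : ℝ) * log p ≤ n * log n := by
  have hdvd : ∏ p ∈ Nat.primesLE n, p ^ (n / p) ∣ n.factorial :=
    prod_dvd_of_isRelPrime
      (fun p hp q hq hpq ↦ Nat.coprime_iff_isRelPrime.1 <| Nat.Coprime.pow _ _ <|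
        (Nat.coprime_primes (Nat.mem_primesLE.1 hp).2 (Nat.mem_primesLE.1 hq).2).2 hpq)
      fun p hp ↦ prime_pow_div_dvd_factorial (Nat.mem_primesLE.1 hp).2 n
  have hle : ((∏ p ∈ Nat.primesLE n, p ^ (n / p) : ℕ) : ℝ) ≤ (n : ℝ) ^ n :=
    mod_cast (Nat.le_of_dvd n.factorial_pos hdvd).trans n.factorial_le_pow
  have hpos (p) (hp : p ∈ Nat.primesLE n) : (0 : ℝ) < (p : ℝ) ^ (n / p) :=
    pow_pos (mod_cast (Nat.mem_primesLE.1 hp).2.pos) _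
  push_cast at hle
  simpa only [log_prod fun p hp ↦ (hpos p hp).ne', log_pow] using log_le_log (prod_pos hpos) hle

-- Compare the exponents of the primes in `n!` with `n! ≤ nⁿ`; Chebyshev's bound on `θ` absorbs the
-- error made in replacing `⌊n / p⌋` by `n / p`.
theorem sum_log_div_le (n : ℕ) : ∑ p ∈ Nat.primesLE n, log p / p ≤ log n + log 4 := by
  rcases n.eq_zero_or_pos with rfl | hn
  · simpa using log_nonneg (by norm_num : (1 : ℝ) ≤ 4)
  have hn' : (0 : ℝ) < n := by exact_mod_cast hn
  have hθ : ∑ p ∈ Nat.primesLE n, log p ≤ log 4 * n := by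
    rw [← Chebyshev.theta_eq_sum_primesLE_log]
    exact Chebyshev.theta_le_log4_mul_x hn'.le
  have hfloor (p) (hp : p ∈ Nat.primesLE n) :
      n * (log p / p) ≤ (n / p : ℕ) * log p + log p := by
    have hlt := (Nat.lt_div_mul_add (Nat.mem_primesLE.1 hp).2.pos (a := n)).le
    have hp0 : (0 : ℝ) < p := by exact_mod_cast (Nat.mem_primesLE.1 hp).2.pos
    have : (n : ℝ) / p ≤ (n / p : ℕ) + 1 := by
      rw [div_le_iff₀ hp0, add_one_mul]
      exact_mod_cast hlt
    calc n * (log p / p) = n / p * log p := by ring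
      _ ≤ ((n / p : ℕ) + 1) * log p := by gcongr
      _ = _ := by ring
  refine le_of_mul_le_mul_left ?_ hn'
  calc n * ∑ p ∈ Nat.primesLE n, log p / p
      ≤ ∑ p ∈ Nat.primesLE n, (n / p : ℕ) * log p + ∑ p ∈ Nat.primesLE n, log p := by
        rw [mul_sum, ← sum_add_distrib]
        exact sum_le_sum hfloor
    _ ≤ n * log n + log 4 * n := add_le_add (sum_div_mul_log_le n) hθ
    _ = n * (log n + log 4) := by ring

theorem exp_le_inv_one_sub {t : ℝ} (ht : t < 1) : exp t ≤ (1 - t)⁻¹ := by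
  rw [le_inv_comm₀ (exp_pos _) (by linarith), ← exp_neg]
  linarith [add_one_le_exp (-t)]

theorem exp_sum_primesBelow_le {f : ℕ →*₀ ℝ} (hf : Summable (‖f ·‖)) (m : ℕ) :
    exp (∑ p ∈ m.primesBelow, f p) ≤ ∏ p ∈ m.primesBelow, (1 - f p)⁻¹ := by
  rw [exp_sum]
  refine prod_le_prod (fun _ _ ↦ (exp_pos _).le) fun p hp ↦ exp_le_inv_one_sub ?_
  exact (le_norm_self _).trans_lt
    (hf.of_norm.norm_lt_one (f := (f : ℕ →* ℝ)) (Nat.mem_primesBelow.1 hp).2.one_lt)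

theorem exp_sum_primesLE_add_le {f g : ℕ →*₀ ℝ} (hf : Summable (‖f ·‖)) (hg : Summable (‖g ·‖))
    (h : ∀ p, p.Prime → 0 ≤ f p + g p) (n : ℕ) :
    exp (∑ p ∈ Nat.primesLE n, (f p + g p)) ≤ (∑' m, f m) * ∑' m, g m := by
  have hprod := (EulerProduct.eulerProduct_completely_multiplicative hf).mul
    (EulerProduct.eulerProduct_completely_multiplicative hg)
  have hbound (m : ℕ) (hm : n + 1 ≤ m) : exp (∑ p ∈ Nat.primesLE n, (f p + g p)) ≤
      (∏ p ∈ m.primesBelow, (1 - f p)⁻¹) * ∏ p ∈ m.primesBelow, (1 - g p)⁻¹ := by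
    have hsub : Nat.primesLE n ⊆ m.primesBelow := fun p hp ↦ by
      rw [Nat.mem_primesLE] at hp
      exact Nat.mem_primesBelow.2 ⟨by omega, hp.2⟩
    calc exp (∑ p ∈ Nat.primesLE n, (f p + g p)) ≤ exp (∑ p ∈ m.primesBelow, (f p + g p)) :=
          exp_le_exp.2 (sum_le_sum_of_subset_of_nonneg hsub
            fun p hp _ ↦ h p (Nat.mem_primesBelow.1 hp).2)
      _ = exp (∑ p ∈ m.primesBelow, f p) * exp (∑ p ∈ m.primesBelow, g p) := by
          rw [sum_add_distrib, exp_add]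
      _ ≤ _ := by
          have hf' := exp_sum_primesBelow_le hf m
          have hg' := exp_sum_primesBelow_le hg m
          exact mul_le_mul hf' hg' (exp_pos _).le ((exp_pos _).le.trans hf')
  exact ge_of_tendsto hprod ((Filter.eventually_ge_atTop (n + 1)).mono hbound)

/-- The completely multiplicative function `n ↦ n⁻ˢ`; the condition `s ≠ 0` makes it vanish at
`0`. -/
noncomputable def rpowNegHom (s : ℝ) (hs : s ≠ 0) : ℕ →*₀ ℝ where
  toFun n := (n : ℝ) ^ (-s)
  map_zero' := by simp [zero_rpow (neg_ne_zero.2 hs)]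
  map_one' := by simp
  map_mul' m n := by
    push_cast
    exact mul_rpow (Nat.cast_nonneg _) (Nat.cast_nonneg _)

theorem tsum_rpow_neg_le {s : ℝ} (hs : 1 < s) : ∑' n : ℕ, (n : ℝ) ^ (-s) ≤ 1 + 1 / (s - 1) := by
  have hshift : ∑' n : ℕ, (n : ℝ) ^ (-s) = ∑' n : ℕ, 1 / (n + 1 : ℝ) ^ s := by
    rw [(summable_nat_rpow.2 (by linarith : -s < -1)).tsum_eq_zero_add,
      Nat.cast_zero, zero_rpow (by linarith), zero_add]
    refine tsum_congr fun n ↦ ?_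
    rw [rpow_neg (by positivity), one_div, Nat.cast_add, Nat.cast_one]
  have hterm : 0 ≤ s * ZetaAsymptotics.termTSum s :=
    mul_nonneg (by linarith) (tsum_nonneg fun n ↦ ZetaAsymptotics.term_nonneg _ _)
  linarith [ZetaAsymptotics.zeta_limit_aux1 hs]

theorem summable_norm_rpowNegHom {s : ℝ} (hs : 1 < s) :
    Summable (‖rpowNegHom s (by positivity) ·‖) :=
  (summable_nat_rpow.2 (by linarith : -s < -1)).congr fun n ↦
    (norm_of_nonneg (by positivity : 0 ≤ (n : ℝ) ^ (-s))).symm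

theorem summable_norm_chi_mul_rpowNegHom {s : ℝ} (hs : 1 < s) :
    Summable (‖(chi * rpowNegHom s (by positivity)) ·‖) := by
  refine (summable_norm_rpowNegHom hs).of_nonneg_of_le (fun _ ↦ norm_nonneg _) fun n ↦ ?_
  change ‖chi n * rpowNegHom s (by positivity) n‖ ≤ _
  rw [norm_mul]
  exact mul_le_of_le_one_left (norm_nonneg _) (abs_chi_le_one n)

theorem tsum_chi_mul_rpowNegHom_le_one {s : ℝ} (hs : 1 < s) :
    ∑' n, (chi * rpowNegHom s (by positivity)) n ≤ 1 := by
  have hpart := (summable_norm_chi_mul_rpowNegHom hs).of_norm.hasSum.tendsto_sum_nat.comp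
    (Filter.tendsto_id.const_mul_atTop' (by norm_num : 0 < 4))
  refine le_of_tendsto' hpart fun k ↦ ?_
  have hanti : AntitoneOn (fun n : ℕ ↦ (n : ℝ) ^ (-s)) (Set.Ici 1) := fun m hm n _ hmn ↦
    rpow_le_rpow_of_nonpos (by exact_mod_cast hm) (by exact_mod_cast hmn) (by linarith)
  have hlast : (0 : ℝ) ≤ ((4 * k + 1 : ℕ) : ℝ) ^ (-s) := by positivity
  have := sum_range_four_mul_chi_mul_le hanti k
  rw [Nat.cast_one, one_rpow] at this
  exact this.trans (by linarith)

theorem sum_one_add_chi_mul_rpow_neg_le {s : ℝ} (hs : 1 < s) (n : ℕ) :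
    ∑ p ∈ Nat.primesLE n, (1 + chi p) * (p : ℝ) ^ (-s) ≤ log (1 + 1 / (s - 1)) := by
  have hs1 : 0 < s - 1 := sub_pos.2 hs
  rw [le_log_iff_exp_le (add_pos one_pos (one_div_pos.2 hs1))]
  simp only [add_mul, one_mul]
  calc exp (∑ p ∈ Nat.primesLE n, ((p : ℝ) ^ (-s) + chi p * (p : ℝ) ^ (-s)))
      ≤ (∑' m : ℕ, (m : ℝ) ^ (-s)) * ∑' m, (chi * rpowNegHom s (by positivity)) m := by
        refine exp_sum_primesLE_add_le (summable_norm_rpowNegHom hs)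
          (summable_norm_chi_mul_rpowNegHom hs) (fun p _ ↦ ?_) n
        change 0 ≤ (p : ℝ) ^ (-s) + chi p * (p : ℝ) ^ (-s)
        rw [← one_add_mul]
        exact mul_nonneg (by linarith [neg_le_of_abs_le (abs_chi_le_one p)]) (by positivity)
    _ ≤ (1 + 1 / (s - 1)) * 1 := mul_le_mul_of_nonneg (tsum_rpow_neg_le hs)
        (tsum_chi_mul_rpowNegHom_le_one hs) (tsum_nonneg fun m ↦ by positivity) zero_le_one
    _ = 1 + 1 / (s - 1) := mul_one _

-- Rankin's trick with exponent `1 + σ`.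
theorem one_add_chi_div_le {p : ℕ} (hp : p.Prime) {σ : ℝ} (hσ : 0 < σ) :
    (1 + chi p) / p ≤ (1 + chi p) * (p : ℝ) ^ (-(1 + σ)) + 2 * σ * (log p / p) := by
  have hp0 : (0 : ℝ) < p := by exact_mod_cast hp.pos
  have hχ := abs_le.1 (abs_chi_le_one p)
  have hexp : 1 - σ * log p ≤ (p : ℝ) ^ (-σ) := by
    rw [rpow_def_of_pos hp0]
    linarith [add_one_le_exp (log p * -σ)]
  have hlog : 0 ≤ σ * log p := mul_nonneg hσ.le (log_natCast_nonneg p)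
  rw [show -(1 + σ) = -σ - 1 by ring, rpow_sub_one hp0.ne', ← mul_div_assoc, ← mul_div_assoc,
    ← add_div]
  refine div_le_div_of_nonneg_right ?_ hp0.le
  nlinarith

theorem exists_sum_one_add_chi_div_le : ∃ C : ℝ, ∀ n : ℕ, 2 ≤ n →
    ∑ p ∈ Nat.primesLE n, (1 + chi p) / p ≤ log (log n) + C := by
  refine ⟨log (1 + 1 / log 2) + 2 * (1 + log 4 / log 2), fun n hn ↦ ?_⟩
  have hlog2 : 0 < log 2 := log_pos one_lt_two
  have hn2 : log 2 ≤ log n := log_le_log two_pos (by exact_mod_cast hn)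
  have hlog : 0 < log n := hlog2.trans_le hn2
  have hσ : 0 < 1 / log n := by positivity
  have hmain := sum_one_add_chi_mul_rpow_neg_le (lt_add_of_pos_right 1 hσ) n
  rw [add_sub_cancel_left, one_div_one_div] at hmain
  have hrankin : 2 * (1 / log n) * ∑ p ∈ Nat.primesLE n, log p / p ≤ 2 * (1 + log 4 / log 2) :=
    calc 2 * (1 / log n) * ∑ p ∈ Nat.primesLE n, log p / p
        ≤ 2 * (1 / log n) * (log n + log 4) := by gcongr; exact sum_log_div_le n
      _ = 2 * (1 + log 4 / log n) := by field_simp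
      _ ≤ 2 * (1 + log 4 / log 2) := by gcongr
  have hloglog : log (1 + log n) ≤ log (log n) + log (1 + 1 / log 2) := by
    rw [← log_mul hlog.ne' (by positivity)]
    gcongr
    have : 1 ≤ log n * (1 / log 2) := by
      rwa [mul_one_div, one_le_div₀ hlog2]
    linarith
  calc ∑ p ∈ Nat.primesLE n, (1 + chi p) / p
      ≤ ∑ p ∈ Nat.primesLE n,
          ((1 + chi p) * (p : ℝ) ^ (-(1 + 1 / log n)) + 2 * (1 / log n) * (log p / p)) :=
        sum_le_sum fun p hp ↦ one_add_chi_div_le (Nat.mem_primesLE.1 hp).2 hσ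
    _ = _ + 2 * (1 / log n) * ∑ p ∈ Nat.primesLE n, log p / p := by
        rw [sum_add_distrib, ← mul_sum]
    _ ≤ _ := by linarith

/-! ### Averages over sums of two squares -/

/-- `n ↦ 1 / n`, as an arithmetic function. -/
noncomputable def recip : ArithmeticFunction ℝ := ⟨fun n ↦ (n : ℝ)⁻¹, by simp⟩

/-- `n ↦ χ(n) / n`, as an arithmetic function. -/
noncomputable def chiRecip : ArithmeticFunction ℝ := ⟨fun n ↦ chi n * (n : ℝ)⁻¹, by simp⟩

/-- `n ↦ r(n) / n` with `r(n) = ∑_{d ∣ n} χ(d)`, one quarter of the number of representations of `n`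
as a sum of two squares, written as the Dirichlet convolution of `χ(n) / n` and `1 / n`. -/
noncomputable def sumChiRecip : ArithmeticFunction ℝ := chiRecip * recip

theorem recip_apply (n : ℕ) : recip n = (n : ℝ)⁻¹ := rfl

theorem chiRecip_apply (n : ℕ) : chiRecip n = chi n * (n : ℝ)⁻¹ := rfl

theorem recip_nonneg (n : ℕ) : 0 ≤ recip n := by
  rw [recip_apply]
  positivity

theorem sumChiRecip_isMultiplicative : sumChiRecip.IsMultiplicative := by
  refine ArithmeticFunction.IsMultiplicative.mul ⟨?_, fun {m n} _ ↦ ?_⟩ ⟨?_, fun {m n} _ ↦ ?_⟩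
  · simp [chiRecip_apply]
  · rw [chiRecip_apply, chiRecip_apply, chiRecip_apply, map_mul, Nat.cast_mul, mul_inv]
    ring
  · simp [recip_apply]
  · rw [recip_apply, recip_apply, recip_apply, Nat.cast_mul, mul_inv]

theorem sumChiRecip_prime_pow {p : ℕ} (hp : p.Prime) (v : ℕ) :
    sumChiRecip (p ^ v) = (∑ i ∈ range (v + 1), chi p ^ i) * (p : ℝ)⁻¹ ^ v := by
  rw [sumChiRecip, ArithmeticFunction.mul_apply,
    Nat.sum_divisorsAntidiagonal (fun i j ↦ chiRecip i * recip j) (n := p ^ v),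
    Nat.sum_divisors_prime_pow hp, sum_mul]
  refine sum_congr rfl fun i hi ↦ ?_
  have hi' : i ≤ v := mem_range_succ_iff.1 hi
  rw [Nat.pow_div hi' hp.pos, chiRecip_apply, recip_apply, map_pow, Nat.cast_pow, Nat.cast_pow,
    ← inv_pow, ← inv_pow, mul_assoc, ← pow_add, Nat.add_sub_cancel' hi']

theorem sum_range_succ_chi_pow_nonneg (p v : ℕ) : 0 ≤ ∑ i ∈ range (v + 1), chi p ^ i := by
  rcases chi_eq_one_or_neg_one_or_zero p with h | h | h
  · simp only [h, one_pow]
    positivity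
  · rw [h, neg_one_geom_sum]
    split_ifs <;> norm_num
  · simp [h, sum_range_succ']

theorem sum_range_succ_chi_pow_le (p v : ℕ) : ∑ i ∈ range (v + 1), chi p ^ i ≤ v + 1 :=
  calc ∑ i ∈ range (v + 1), chi p ^ i ≤ ∑ _i ∈ range (v + 1), (1 : ℝ) :=
        sum_le_sum fun _ _ ↦ (le_abs_self _).trans
          (by rw [abs_pow]; exact pow_le_one₀ (abs_nonneg _) (abs_chi_le_one p))
    _ = v + 1 := by simp

theorem sumChiRecip_nonneg (n : ℕ) : 0 ≤ sumChiRecip n := by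
  rcases eq_or_ne n 0 with rfl | hn
  · simp
  rw [sumChiRecip_isMultiplicative.multiplicative_factorization _ hn]
  refine prod_nonneg fun p hp ↦ ?_
  dsimp only
  rw [sumChiRecip_prime_pow (Nat.prime_of_mem_primeFactors hp)]
  exact mul_nonneg (sum_range_succ_chi_pow_nonneg _ _) (by positivity)

theorem sum_range_succ_mul_pow_le {t : ℝ} (h0 : 0 ≤ t) (h1 : t < 1) (V : ℕ) :
    ∑ v ∈ range V, ((v : ℝ) + 1) * t ^ v ≤ ((1 - t) ^ 2)⁻¹ := by
  have hident : (1 - t) ^ 2 * ∑ v ∈ range V, ((v : ℝ) + 1) * t ^ v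
      = 1 - ((V + 1) * t ^ V - V * t ^ (V + 1)) := by
    induction V with
    | zero => simp
    | succ V ih =>
      rw [sum_range_succ, mul_add, ih]
      push_cast
      ring
  have hpos : 0 < (1 - t) ^ 2 := pow_pos (sub_pos.2 h1) 2
  have htail : V * t ^ (V + 1) ≤ (V + 1) * t ^ V := by
    gcongr ?_ * ?_
    · linarith
    · exact pow_le_pow_of_le_one h0 h1.le (Nat.le_succ V)
  rw [← one_div, le_div_iff₀' hpos, hident]
  linarith

/-- `(1 - 1/p)⁻²`, the square of the Euler factor at `p` of `∑ 1/n`. -/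
noncomputable def sqEulerFactor (p : ℕ) : ℝ := ((1 - (p : ℝ)⁻¹) ^ 2)⁻¹

theorem natCast_prime_inv_le_half {p : ℕ} (hp : p.Prime) : (p : ℝ)⁻¹ ≤ 1 / 2 := by
  rw [one_div]
  exact inv_anti₀ two_pos (by exact_mod_cast hp.two_le)

theorem one_le_sqEulerFactor {p : ℕ} (hp : p.Prime) : 1 ≤ sqEulerFactor p := by
  have hhalf := natCast_prime_inv_le_half hp
  have h0 : 0 ≤ (p : ℝ)⁻¹ := by positivity
  exact (one_le_inv₀ (by nlinarith)).2 (by nlinarith)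

theorem sum_range_sumChiRecip_prime_pow_le {p : ℕ} (hp : p.Prime) (V : ℕ) :
    ∑ v ∈ range V, sumChiRecip (p ^ v) ≤ sqEulerFactor p := by
  have hhalf := natCast_prime_inv_le_half hp
  refine le_trans (sum_le_sum fun v _ ↦ ?_)
    (sum_range_succ_mul_pow_le (by positivity) (by linarith : (p : ℝ)⁻¹ < 1) V)
  rw [sumChiRecip_prime_pow hp]
  gcongr
  exact sum_range_succ_chi_pow_le p v

theorem sum_range_two_mul_sumChiRecip_prime_pow {p : ℕ} (hp : p.Prime) (h3 : p % 4 = 3) (k : ℕ) :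
    ∑ v ∈ range (2 * k), sumChiRecip (p ^ v) = ∑ j ∈ range k, ((p : ℝ)⁻¹ ^ 2) ^ j := by
  induction k with
  | zero => simp
  | succ k ih =>
    rw [show 2 * (k + 1) = 2 * k + 1 + 1 by ring, sum_range_succ, sum_range_succ, ih,
      sum_range_succ, sumChiRecip_prime_pow hp, sumChiRecip_prime_pow hp,
      chi_of_mod_four_eq_three h3, neg_one_geom_sum, neg_one_geom_sum,
      if_neg (by grind), if_pos (by grind), ← pow_mul]
    ring

theorem sum_range_sumChiRecip_prime_pow_le_of_mod_four_eq_three {p : ℕ} (hp : p.Prime)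
    (h3 : p % 4 = 3) (V : ℕ) :
    ∑ v ∈ range V, sumChiRecip (p ^ v) ≤ (1 - (p : ℝ)⁻¹ ^ 2)⁻¹ := by
  have hlt : (p : ℝ)⁻¹ ^ 2 < 1 :=
    pow_lt_one₀ (by positivity) (by linarith [natCast_prime_inv_le_half hp]) two_ne_zero
  calc ∑ v ∈ range V, sumChiRecip (p ^ v) ≤ ∑ v ∈ range (2 * V), sumChiRecip (p ^ v) :=
        sum_le_sum_of_subset_of_nonneg (range_subset_range.2 (by omega))
          fun _ _ _ ↦ sumChiRecip_nonneg _
    _ = ∑ j ∈ range V, ((p : ℝ)⁻¹ ^ 2) ^ j := sum_range_two_mul_sumChiRecip_prime_pow hp h3 V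
    _ ≤ ∑' j, ((p : ℝ)⁻¹ ^ 2) ^ j :=
        (summable_geometric_of_lt_one (by positivity) hlt).sum_le_tsum _
          fun _ _ ↦ by positivity
    _ = (1 - (p : ℝ)⁻¹ ^ 2)⁻¹ := tsum_geometric_of_lt_one (by positivity) hlt

/-- `(2/p) / (1 - 2/p)`, the Selberg-sieve weight of a prime `p ≡ 1 (mod 4)`, for which
`ρ(p) = 2`. -/
noncomputable def sieveWeight (p : ℕ) : ℝ := 2 / p * (1 - 2 / p : ℝ)⁻¹

theorem sqEulerFactor_sub_one_le_sieveWeight {p : ℕ} (hp : 5 ≤ p) :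
    sqEulerFactor p - 1 ≤ sieveWeight p := by
  have hp' : (5 : ℝ) ≤ p := by exact_mod_cast hp
  have h0 : (p : ℝ) ≠ 0 := by linarith
  have hweight : sieveWeight p = 2 / (p - 2) := by
    rw [sieveWeight, one_sub_div h0, inv_div, div_mul_div_cancel₀ h0]
  have heuler : sqEulerFactor p = p ^ 2 / (p - 1) ^ 2 := by
    rw [sqEulerFactor, ← one_div (p : ℝ), one_sub_div h0, div_pow, inv_div]
  rw [hweight, heuler, sub_le_iff_le_add, div_add_one (by linarith),
    div_le_div_iff₀ (by nlinarith) (by linarith)]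
  nlinarith

theorem sum_range_sumChiRecip_prime_pow_succ_le {p : ℕ} (hp : p.Prime) (h1 : p % 4 = 1) (V : ℕ) :
    ∑ v ∈ range V, sumChiRecip (p ^ (v + 1)) ≤ sieveWeight p := by
  have h5 : 5 ≤ p := by
    have := hp.two_le
    omega
  have hsum := sum_range_sumChiRecip_prime_pow_le hp (V + 1)
  rw [sum_range_succ', pow_zero, sumChiRecip_isMultiplicative.1] at hsum
  linarith [sqEulerFactor_sub_one_le_sieveWeight h5]

-- Sum over the second variable of the convolution first: the inner sums `(1/d) ∑_{m ≤ N/d} 1/m`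
-- decrease in `d`, so the alternating sum over `d` is at least its first two terms.
theorem two_thirds_log_le_sum_sumChiRecip {N : ℕ} (hN : 1 ≤ N) :
    2 / 3 * log N ≤ ∑ n ∈ Ioc 0 N, sumChiRecip n := by
  have hmono : Monotone fun a ↦ ∑ m ∈ Ioc 0 a, recip m := fun a b hab ↦
    sum_le_sum_of_subset_of_nonneg (Ioc_subset_Ioc_right hab) fun _ _ _ ↦ recip_nonneg _
  set c : ℕ → ℝ := fun d ↦ (d : ℝ)⁻¹ * ∑ m ∈ Ioc 0 (N / d), recip m with hc
  have hanti : AntitoneOn c (Set.Ici 1) := fun m hm n _ hmn ↦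
    mul_le_mul (inv_anti₀ (by exact_mod_cast hm) (by exact_mod_cast hmn))
      (hmono (Nat.div_le_div_left hmn hm)) (sum_nonneg fun _ _ ↦ recip_nonneg _) (by positivity)
  have hconv : ∑ n ∈ Ioc 0 N, sumChiRecip n = ∑ n ∈ range (4 * N), chi n * c n := by
    rw [sumChiRecip, ArithmeticFunction.sum_Ioc_mul_eq_sum_sum]
    simp only [chiRecip_apply, mul_assoc]
    refine sum_subset (fun n ↦ by simp only [mem_Ioc, mem_range]; omega) fun n _ hn ↦ ?_
    rcases n.eq_zero_or_pos with rfl | hn0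
    · simp
    · rw [Nat.div_eq_of_lt (by simpa [hn0] using hn), Ioc_self, sum_empty, mul_zero, mul_zero]
  have hharmonic : log N ≤ ∑ m ∈ Ioc 0 N, recip m := by
    have := log_add_one_le_harmonic N
    rw [harmonic_eq_sum_Icc] at this
    push_cast at this
    exact (log_le_log (by exact_mod_cast hN) (by linarith)).trans this
  have hthird : c 3 ≤ 1 / 3 * c 1 := by
    simp only [hc, Nat.cast_one, inv_one, one_mul, Nat.cast_ofNat, one_div, Nat.div_one]
    exact mul_le_mul_of_nonneg_left (hmono (Nat.div_le_self N 3)) (by norm_num)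
  have hc1 : c 1 = ∑ m ∈ Ioc 0 N, recip m := by simp [hc]
  rw [hconv]
  linarith [le_sum_range_four_mul_chi_mul hanti hN]

/-- The sum of `h n` over `1 ≤ n ≤ y` all of whose prime factors lie in `S`. -/
noncomputable def factoredSum (h : ℕ → ℝ) (S : Finset ℕ) (y : ℕ) : ℝ :=
  ∑ n ∈ Icc 1 y with n.primeFactors ⊆ S, h n

/-- The sum of `∏_{p ∈ t} g p` over the subsets `t` of `T` with `∏_{p ∈ t} p ≤ y`. -/
noncomputable def subsetProdSum (g : ℕ → ℝ) (T : Finset ℕ) (y : ℕ) : ℝ :=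
  ∑ t ∈ T.powerset with ∏ p ∈ t, p ≤ y, ∏ p ∈ t, g p

theorem subsetProdSum_insert (g : ℕ → ℝ) {T : Finset ℕ} {p : ℕ} (hp : 0 < p) (hpT : p ∉ T)
    (y : ℕ) :
    subsetProdSum g (insert p T) y = subsetProdSum g T y + g p * subsetProdSum g T (y / p) := by
  simp only [subsetProdSum]
  rw [sum_filter, sum_powerset_insert hpT, sum_filter, sum_filter, mul_sum]
  congr 1
  refine sum_congr rfl fun t ht ↦ ?_
  have hpt : p ∉ t := fun h ↦ hpT (mem_powerset.1 ht h)
  rw [prod_insert hpt, prod_insert hpt, mul_ite, mul_zero]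
  simp only [Nat.le_div_iff_mul_le hp, mul_comm]

section FactoredSum

variable {h : ArithmeticFunction ℝ} (h0 : ∀ n, 0 ≤ h n)
include h0

theorem factoredSum_nonneg (S : Finset ℕ) (y : ℕ) : 0 ≤ factoredSum h S y :=
  sum_nonneg fun _ _ ↦ h0 _

theorem factoredSum_mono (S : Finset ℕ) : Monotone (factoredSum h S) := fun _ _ hyz ↦
  sum_le_sum_of_subset_of_nonneg (filter_subset_filter _ (Icc_subset_Icc_right hyz))
    fun _ _ _ ↦ h0 _

variable (hm : h.IsMultiplicative)
include hm

-- Every `n` splits as `p ^ v * m` with `p ∤ m`.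
theorem factoredSum_insert_le (S : Finset ℕ) {p : ℕ} (hp : p.Prime) (y : ℕ) :
    factoredSum h (insert p S) y ≤
      ∑ v ∈ range (y + 1), h (p ^ v) * factoredSum h S (y / p ^ v) := by
  simp only [factoredSum, mul_sum]
  rw [sum_sigma']
  let split (n : ℕ) : Σ _ : ℕ, ℕ := ⟨n.factorization p, n / p ^ n.factorization p⟩
  have hne {n : ℕ} (hn : n ∈ {n ∈ Icc 1 y | n.primeFactors ⊆ insert p S}) : n ≠ 0 :=
    (Nat.one_le_iff_ne_zero.1 (mem_Icc.1 (mem_filter.1 hn).1).1)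
  have hinj : Set.InjOn split ({n ∈ Icc 1 y | n.primeFactors ⊆ insert p S} : Finset ℕ) := by
    intro a _ b _ hab
    simp only [split, Sigma.mk.injEq, heq_eq_eq] at hab
    rw [← Nat.ordProj_mul_ordCompl_eq_self a p, ← Nat.ordProj_mul_ordCompl_eq_self b p,
      hab.2, hab.1]
  have hsplit : ∑ n ∈ Icc 1 y with n.primeFactors ⊆ insert p S, h n =
      ∑ x ∈ image split {n ∈ Icc 1 y | n.primeFactors ⊆ insert p S}, h (p ^ x.1) * h x.2 := by
    rw [sum_image hinj]
    refine sum_congr rfl fun n hn ↦ ?_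
    simp only [split]
    rw [← hm.map_mul_of_coprime ((Nat.coprime_ordCompl hp (hne hn)).pow_left _),
      Nat.ordProj_mul_ordCompl_eq_self]
  rw [hsplit]
  refine sum_le_sum_of_subset_of_nonneg (fun x hx ↦ ?_) fun x _ _ ↦ mul_nonneg (h0 _) (h0 _)
  obtain ⟨n, hn, rfl⟩ := mem_image.1 hx
  have hn0 := hne hn
  obtain ⟨hny, hnS⟩ := mem_filter.1 hn
  have hny' := (mem_Icc.1 hny).2
  simp only [split, mem_sigma, mem_range, mem_filter, mem_Icc]
  refine ⟨(Nat.factorization_lt p hn0).trans_le (by omega),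
    ⟨Nat.ordCompl_pos p hn0, Nat.div_le_div_right hny'⟩, fun q hq ↦ ?_⟩
  have hqdvd := Nat.dvd_of_mem_primeFactors hq
  refine (mem_insert.1 (hnS (Nat.mem_primeFactors.2
    ⟨Nat.prime_of_mem_primeFactors hq, hqdvd.trans (Nat.ordCompl_dvd n p), hn0⟩))).resolve_left ?_
  rintro rfl
  exact Nat.not_dvd_ordCompl hp hn0 hqdvd

theorem factoredSum_le_subsetProdSum {g : ℕ → ℝ} {T : Finset ℕ} (hT : ∀ p ∈ T, p.Prime)
    (hg : ∀ p ∈ T, ∀ V, ∑ v ∈ range V, h (p ^ (v + 1)) ≤ g p) (y : ℕ) :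
    factoredSum h T y ≤ subsetProdSum g T y := by
  induction T using Finset.induction_on generalizing y with
  | empty =>
    have hone : {n ∈ Icc 1 y | n.primeFactors ⊆ ∅} = if 1 ≤ y then {1} else ∅ := by
      ext n
      split_ifs <;> simp [Nat.primeFactors_eq_empty] <;> omega
    simp only [factoredSum, subsetProdSum, hone, powerset_empty, filter_singleton, prod_empty]
    by_cases hy : 1 ≤ y <;> simp [hy, hm.1]
  | insert p T hpT ih =>
    simp only [forall_mem_insert] at hT hg
    rw [subsetProdSum_insert g hT.1.pos hpT]
    have hg0 : 0 ≤ g p := by simpa using hg.1 0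
    calc factoredSum h (insert p T) y
        ≤ ∑ v ∈ range (y + 1), h (p ^ v) * factoredSum h T (y / p ^ v) :=
          factoredSum_insert_le h0 hm T hT.1 y
      _ = factoredSum h T y +
            ∑ v ∈ range y, h (p ^ (v + 1)) * factoredSum h T (y / p ^ (v + 1)) := by
          rw [sum_range_succ', add_comm, pow_zero, hm.1, one_mul, Nat.div_one]
      _ ≤ factoredSum h T y + ∑ v ∈ range y, h (p ^ (v + 1)) * factoredSum h T (y / p) := by
          gcongr with v
          · exact h0 _
          · exact factoredSum_mono h0 T
              (Nat.div_le_div_left (Nat.le_self_pow v.succ_ne_zero p) hT.1.pos)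
      _ ≤ factoredSum h T y + g p * factoredSum h T (y / p) := by
          rw [← sum_mul]
          gcongr
          · exact factoredSum_nonneg h0 T _
          · exact hg.1 y
      _ ≤ _ := by gcongr <;> exact ih hT.2 hg.2 _

theorem factoredSum_union_le {H : ℕ → ℝ} {T U : Finset ℕ} (hU : ∀ p ∈ U, p.Prime)
    (hH : ∀ p ∈ U, ∀ V, ∑ v ∈ range V, h (p ^ v) ≤ H p) (y : ℕ) :
    factoredSum h (U ∪ T) y ≤ (∏ p ∈ U, H p) * factoredSum h T y := by
  induction U using Finset.induction_on with
  | empty => simp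
  | insert p U hpU ih =>
    simp only [forall_mem_insert] at hU hH
    rw [insert_union, prod_insert hpU]
    have hH0 : 0 ≤ H p := by simpa using hH.1 0
    calc factoredSum h (insert p (U ∪ T)) y
        ≤ ∑ v ∈ range (y + 1), h (p ^ v) * factoredSum h (U ∪ T) (y / p ^ v) :=
          factoredSum_insert_le h0 hm _ hU.1 y
      _ ≤ ∑ v ∈ range (y + 1), h (p ^ v) * factoredSum h (U ∪ T) y := by
          gcongr with v
          · exact h0 _
          · exact factoredSum_mono h0 _ (Nat.div_le_self _ _)
      _ ≤ H p * factoredSum h (U ∪ T) y := by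
          rw [← sum_mul]
          exact mul_le_mul_of_nonneg_right (hH.1 _) (factoredSum_nonneg h0 _ _)
      _ ≤ H p * ((∏ p ∈ U, H p) * factoredSum h T y) := by
          gcongr
          exact ih hU.2 hH.2
      _ = _ := by ring

end FactoredSum

theorem prod_primesLE_inv_one_sub_inv_sq_le (w : ℕ) :
    ∏ p ∈ Nat.primesLE w, (1 - (p : ℝ)⁻¹ ^ 2)⁻¹ ≤ 2 := by
  set f : ℕ →*₀ ℝ := rpowNegHom 2 two_ne_zero
  have hf (n : ℕ) : f n = (n : ℝ)⁻¹ ^ 2 := by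
    change (n : ℝ) ^ (-2 : ℝ) = _
    rw [rpow_neg n.cast_nonneg, rpow_two, inv_pow]
  have hsum : Summable f := (summable_norm_rpowNegHom one_lt_two).of_norm
  calc ∏ p ∈ Nat.primesLE w, (1 - (p : ℝ)⁻¹ ^ 2)⁻¹
      = ∑' m : (w + 1).smoothNumbers, f m := by
        refine (prod_congr rfl fun p _ ↦ ?_).trans
          (EulerProduct.prod_primesBelow_geometric_eq_tsum_smoothNumbers
            (f := (f : ℕ →* ℝ)) hsum (w + 1))
        rw [← hf]
        rfl
    _ ≤ ∑' m, f m := Summable.tsum_subtype_le _ _ (fun m ↦ by rw [hf]; positivity) hsum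
    _ ≤ 1 + 1 / (2 - 1) := tsum_rpow_neg_le one_lt_two
    _ = 2 := by norm_num

theorem prod_primeFactors_two_mul_sqEulerFactor_le {a : ℕ} (ha : a ≠ 0) :
    ∏ p ∈ (2 * a).primeFactors, sqEulerFactor p ≤ 4 * ∏ p ∈ a.primeFactors, sqEulerFactor p := by
  have hone : 1 ≤ ∏ p ∈ a.primeFactors, sqEulerFactor p :=
    one_le_prod fun p hp ↦ one_le_sqEulerFactor (Nat.prime_of_mem_primeFactors hp)
  have htwo : sqEulerFactor 2 = 4 := by norm_num [sqEulerFactor]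
  rw [Nat.primeFactors_mul two_ne_zero ha, Nat.prime_two.primeFactors, singleton_union]
  by_cases h2 : 2 ∈ a.primeFactors
  · rw [insert_eq_of_mem h2]
    linarith
  · rw [prod_insert h2, htwo]

/-- The primes `p ≤ w`, `p ≡ 1 (mod 4)`, not dividing `a`. -/
def sievingPrimes (a w : ℕ) : Finset ℕ := {p ∈ Nat.primesLE w | p % 4 = 1 ∧ ¬ p ∣ a}

theorem mem_sievingPrimes {a w p : ℕ} :
    p ∈ sievingPrimes a w ↔ (p ≤ w ∧ p.Prime) ∧ p % 4 = 1 ∧ ¬ p ∣ a := by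
  rw [sievingPrimes, mem_filter, Nat.mem_primesLE]

/-- A bound for the local factor at a prime `p` outside `sievingPrimes a w`. -/
noncomputable def nonsievingFactor (a p : ℕ) : ℝ :=
  (1 - (p : ℝ)⁻¹ ^ 2)⁻¹ * if p ∣ 2 * a then sqEulerFactor p else 1

theorem one_le_inv_one_sub_inv_sq {p : ℕ} (hp : p.Prime) : 1 ≤ (1 - (p : ℝ)⁻¹ ^ 2)⁻¹ := by
  have hhalf := natCast_prime_inv_le_half hp
  have h0 : 0 ≤ (p : ℝ)⁻¹ := by positivity
  exact (one_le_inv₀ (by nlinarith)).2 (by nlinarith)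

theorem sum_range_sumChiRecip_prime_pow_le_nonsievingFactor {a p : ℕ} (hp : p.Prime)
    (h : p % 4 = 1 → p ∣ a) (V : ℕ) :
    ∑ v ∈ range V, sumChiRecip (p ^ v) ≤ nonsievingFactor a p := by
  have hone := one_le_inv_one_sub_inv_sq hp
  rw [nonsievingFactor]
  split_ifs with hdvd
  · exact (sum_range_sumChiRecip_prime_pow_le hp V).trans
      (le_mul_of_one_le_left (zero_le_one.trans (one_le_sqEulerFactor hp)) hone)
  · rw [mul_one]
    refine sum_range_sumChiRecip_prime_pow_le_of_mod_four_eq_three hp ?_ V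
    have h1 : p % 4 ≠ 1 := fun h1 ↦ hdvd ((h h1).mul_left 2)
    have h2 : p ≠ 2 := fun h2 ↦ hdvd (h2 ▸ dvd_mul_right 2 a)
    have := hp.eq_two_or_odd
    omega

theorem prod_nonsievingFactor_le {a w : ℕ} (ha : a ≠ 0) {U : Finset ℕ} (hU : U ⊆ Nat.primesLE w) :
    ∏ p ∈ U, nonsievingFactor a p ≤ 8 * ∏ p ∈ a.primeFactors, sqEulerFactor p := by
  have hprime {p} (hp : p ∈ U) : p.Prime := (Nat.mem_primesLE.1 (hU hp)).2
  have hsq : ∏ p ∈ U, (1 - (p : ℝ)⁻¹ ^ 2)⁻¹ ≤ 2 :=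
    (prod_le_prod_of_subset_of_one_le hU
      (fun p hp ↦ zero_le_one.trans (one_le_inv_one_sub_inv_sq (hprime hp)))
      fun p hp _ ↦ one_le_inv_one_sub_inv_sq (Nat.mem_primesLE.1 hp).2).trans
      (prod_primesLE_inv_one_sub_inv_sq_le w)
  have hdvd : ∏ p ∈ U with p ∣ 2 * a, sqEulerFactor p ≤
      ∏ p ∈ (2 * a).primeFactors, sqEulerFactor p :=
    prod_le_prod_of_subset_of_one_le
      (fun p hp ↦ Nat.mem_primeFactors.2
        ⟨hprime (mem_filter.1 hp).1, (mem_filter.1 hp).2, by omega⟩)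
      (fun p hp ↦ zero_le_one.trans (one_le_sqEulerFactor (hprime (mem_filter.1 hp).1)))
      fun p hp _ ↦ one_le_sqEulerFactor (Nat.prime_of_mem_primeFactors hp)
  have hdvd0 : 0 ≤ ∏ p ∈ U with p ∣ 2 * a, sqEulerFactor p := prod_nonneg fun p hp ↦
    zero_le_one.trans (one_le_sqEulerFactor (hprime (mem_filter.1 hp).1))
  simp only [nonsievingFactor]
  rw [prod_mul_distrib, ← prod_filter]
  calc _ ≤ 2 * ∏ p ∈ (2 * a).primeFactors, sqEulerFactor p :=
        mul_le_mul hsq hdvd hdvd0 zero_le_two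
    _ ≤ _ := by linarith [prod_primeFactors_two_mul_sqEulerFactor_le ha]

theorem two_thirds_log_le_subsetProdSum_sieveWeight {a w : ℕ} (ha : a ≠ 0) (hw : 1 ≤ w) :
    2 / 3 * log w ≤ 8 * (∏ p ∈ a.primeFactors, sqEulerFactor p) *
      subsetProdSum sieveWeight (sievingPrimes a w) w := by
  set T := sievingPrimes a w
  set U := Nat.primesLE w \ T
  have hUT : U ∪ T = Nat.primesLE w := sdiff_union_of_subset (filter_subset _ _)
  have hfull : ∑ n ∈ Ioc 0 w, sumChiRecip n = factoredSum sumChiRecip (U ∪ T) w := by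
    rw [hUT, factoredSum, filter_true_of_mem]
    · rfl
    · exact fun n hn p hp ↦ Nat.mem_primesLE.2
        ⟨(Nat.le_of_mem_primeFactors hp).trans (mem_Icc.1 hn).2, Nat.prime_of_mem_primeFactors hp⟩
  have hU (p) (hp : p ∈ U) : p.Prime := (Nat.mem_primesLE.1 (mem_sdiff.1 hp).1).2
  have hlocalU (p) (hp : p ∈ U) : ∀ V, ∑ v ∈ range V, sumChiRecip (p ^ v) ≤ nonsievingFactor a p :=
    sum_range_sumChiRecip_prime_pow_le_nonsievingFactor (hU p hp) fun h1 ↦ by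
      by_contra hpa
      obtain ⟨hpw, hpT⟩ := mem_sdiff.1 hp
      exact hpT (mem_filter.2 ⟨hpw, h1, hpa⟩)
  have hT (p) (hp : p ∈ T) : ∀ V, ∑ v ∈ range V, sumChiRecip (p ^ (v + 1)) ≤ sieveWeight p :=
    have hp' := mem_sievingPrimes.1 hp
    sum_range_sumChiRecip_prime_pow_succ_le hp'.1.2 hp'.2.1
  calc 2 / 3 * log w ≤ factoredSum sumChiRecip (U ∪ T) w :=
        (two_thirds_log_le_sum_sumChiRecip hw).trans_eq hfull
    _ ≤ (∏ p ∈ U, nonsievingFactor a p) * factoredSum sumChiRecip T w :=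
        factoredSum_union_le sumChiRecip_nonneg sumChiRecip_isMultiplicative hU hlocalU w
    _ ≤ (8 * ∏ p ∈ a.primeFactors, sqEulerFactor p) * factoredSum sumChiRecip T w :=
        mul_le_mul_of_nonneg_right (prod_nonsievingFactor_le ha sdiff_subset)
          (factoredSum_nonneg sumChiRecip_nonneg T w)
    _ ≤ _ := by
        gcongr
        · exact mul_nonneg (by norm_num) (prod_nonneg fun p hp ↦
            zero_le_one.trans (one_le_sqEulerFactor (Nat.prime_of_mem_primeFactors hp)))
        · exact factoredSum_le_subsetProdSum sumChiRecip_nonneg sumChiRecip_isMultiplicative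
            (fun p hp ↦ (mem_sievingPrimes.1 hp).1.2) hT w

/-! ### Selberg's sieve -/

open scoped ArithmeticFunction.Moebius ArithmeticFunction.zeta in
theorem sum_divisors_moebius (n : ℕ) : ∑ d ∈ n.divisors, (μ d : ℝ) = if n = 1 then 1 else 0 := by
  rw [← ArithmeticFunction.one_apply (R := ℝ), ← ArithmeticFunction.coe_zeta_mul_coe_moebius,
    ArithmeticFunction.coe_zeta_mul_apply]
  rfl

open scoped ArithmeticFunction.Moebius in
theorem sum_divisors_filter_dvd_moebius (l : ℕ) {m : ℕ} (hm : Squarefree m) :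
    ∑ d ∈ m.divisors with l ∣ d, (μ d : ℝ) = if m = l then (μ l : ℝ) else 0 := by
  by_cases hlm : l ∣ m
  · obtain ⟨e, rfl⟩ := hlm
    obtain ⟨hl0, he0⟩ := mul_ne_zero_iff.1 hm.ne_zero
    have himage : {d ∈ (l * e).divisors | l ∣ d} = e.divisors.image (l * ·) := by
      ext d
      simp only [mem_filter, Nat.mem_divisors, mem_image]
      constructor
      · rintro ⟨⟨hd, _⟩, c, rfl⟩
        exact ⟨c, ⟨Nat.dvd_of_mul_dvd_mul_left (Nat.pos_of_ne_zero hl0) hd, he0⟩, rfl⟩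
      · rintro ⟨c, ⟨hc, _⟩, rfl⟩
        exact ⟨⟨Nat.mul_dvd_mul_left l hc, hm.ne_zero⟩, dvd_mul_right l c⟩
    have hmul (d) (hd : d ∈ e.divisors) : (μ (l * d) : ℝ) = μ l * μ d := by
      rw [ArithmeticFunction.isMultiplicative_moebius.map_mul_of_coprime
        ((Nat.coprime_of_squarefree_mul hm).coprime_dvd_right (Nat.dvd_of_mem_divisors hd)),
        Int.cast_mul]
    rw [himage, sum_image (mul_right_injective₀ hl0).injOn, sum_congr rfl hmul, ← mul_sum,
      sum_divisors_moebius, mul_ite, mul_one, mul_zero]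
    simp only [mul_eq_left₀ hl0]
  · rw [filter_false_of_mem fun d hd hld ↦ hlm (hld.trans (Nat.dvd_of_mem_divisors hd)), sum_empty,
      if_neg (by rintro rfl; exact hlm dvd_rfl)]

section SelbergSieve

open BoundingSieve ArithmeticFunction.Moebius

/-- Selberg's sum of `∏_{p ∣ l} ν(p) / (1 - ν(p))` over the sieving moduli `l ≤ w`. -/
noncomputable def selbergSum (s : BoundingSieve) (w : ℕ) : ℝ :=
  ∑ l ∈ s.prodPrimes.divisors with l ≤ w, s.selbergTerms l

/-- Selberg's weight at `d`, which minimises the main term among the weights supported on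
`d ≤ w` and normalised to take the value `1` at `1`. -/
noncomputable def selbergWeight (s : BoundingSieve) (w d : ℕ) : ℝ :=
  μ d / (s.nu d * selbergSum s w) *
    ∑ l ∈ s.prodPrimes.divisors with d ∣ l ∧ l ≤ w, s.selbergTerms l

/-- The pairs of positive integers up to `w` with least common multiple `d`. -/
def lcmPairs (w d : ℕ) : Finset (ℕ × ℕ) := {x ∈ Icc 1 w ×ˢ Icc 1 w | Nat.lcm x.1 x.2 = d}

theorem mem_lcmPairs {w d : ℕ} {x : ℕ × ℕ} : x ∈ lcmPairs w d ↔
    ((1 ≤ x.1 ∧ x.1 ≤ w) ∧ 1 ≤ x.2 ∧ x.2 ≤ w) ∧ Nat.lcm x.1 x.2 = d := by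
  simp only [lcmPairs, mem_filter, mem_product, mem_Icc]

theorem le_sq_of_mem_lcmPairs {w d : ℕ} {x : ℕ × ℕ} (hx : x ∈ lcmPairs w d) : d ≤ w ^ 2 := by
  obtain ⟨⟨⟨hpos, hle⟩, hpos', hle'⟩, rfl⟩ := mem_lcmPairs.1 hx
  refine (Nat.le_of_dvd (Nat.mul_pos hpos hpos') (Nat.lcm_dvd_mul _ _)).trans ?_
  rw [sq]
  exact Nat.mul_le_mul hle hle'

theorem sum_card_lcmPairs_le (w : ℕ) (D : Finset ℕ) : ∑ d ∈ D, #(lcmPairs w d) ≤ w ^ 2 := by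
  simp only [lcmPairs]
  rw [sum_card_fiberwise_eq_card_filter]
  refine (card_filter_le _ _).trans_eq ?_
  rw [card_product, Nat.card_Icc, Nat.add_sub_cancel, sq]

theorem abs_lambdaSquared_le {lam : ℕ → ℝ} {w d : ℕ} {C : ℝ} (hsupp : ∀ e, w < e → lam e = 0)
    (hC : ∀ e, e ∣ d → |lam e| ≤ C) :
    |lambdaSquared lam d| ≤ #(lcmPairs w d) * C ^ 2 := by
  have hterm (x : ℕ × ℕ) (hx : x ∈ d.divisors ×ˢ d.divisors) :
      |if d = Nat.lcm x.1 x.2 then lam x.1 * lam x.2 else 0| ≤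
        if x ∈ lcmPairs w d then C ^ 2 else 0 := by
    obtain ⟨h1, h2⟩ := mem_product.1 hx
    have hC1 := hC x.1 (Nat.dvd_of_mem_divisors h1)
    have hC2 := hC x.2 (Nat.dvd_of_mem_divisors h2)
    split_ifs with hlcm hmem hmem
    · rw [abs_mul, sq]
      exact mul_le_mul hC1 hC2 (abs_nonneg _) ((abs_nonneg _).trans hC1)
    · have hzero : lam x.1 * lam x.2 = 0 := by
        by_contra! hne
        have hle (e) (he : lam e ≠ 0) : e ≤ w := not_lt.1 fun h ↦ he (hsupp e h)
        exact hmem (mem_lcmPairs.2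
          ⟨⟨⟨Nat.pos_of_mem_divisors h1, hle _ (left_ne_zero_of_mul hne)⟩,
            Nat.pos_of_mem_divisors h2, hle _ (right_ne_zero_of_mul hne)⟩, hlcm.symm⟩)
      rw [hzero, abs_zero]
    · rw [abs_zero]
      positivity
    · rw [abs_zero]
  calc |lambdaSquared lam d|
      ≤ ∑ x ∈ d.divisors ×ˢ d.divisors,
          |if d = Nat.lcm x.1 x.2 then lam x.1 * lam x.2 else 0| := by
        rw [lambdaSquared, ← sum_product']
        exact abs_sum_le_sum_abs _ _
    _ ≤ ∑ x ∈ d.divisors ×ˢ d.divisors with x ∈ lcmPairs w d, C ^ 2 := by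
        rw [sum_filter]
        exact sum_le_sum hterm
    _ ≤ _ := by
        rw [sum_const, nsmul_eq_mul]
        gcongr
        exact fun x hx ↦ (mem_filter.1 hx).2

variable (s : BoundingSieve) {w : ℕ}

theorem selbergSum_pos (hw : 1 ≤ w) : 0 < selbergSum s w :=
  sum_pos (fun _ hl ↦ selbergTerms_pos (Nat.dvd_of_mem_divisors (mem_filter.1 hl).1))
    ⟨1, mem_filter.2 ⟨Nat.one_mem_divisors.2 prodPrimes_ne_zero, hw⟩⟩

theorem selbergWeight_one (hw : 1 ≤ w) : selbergWeight s w 1 = 1 := by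
  simp only [selbergWeight, s.nu_mult.1, one_dvd, true_and, one_mul,
    ArithmeticFunction.moebius_apply_one, Int.cast_one]
  exact one_div_mul_cancel (selbergSum_pos s hw).ne'

theorem selbergWeight_eq_zero_of_lt {d : ℕ} (hd : w < d) : selbergWeight s w d = 0 := by
  rw [selbergWeight, filter_false_of_mem, sum_empty, mul_zero]
  exact fun l hl h ↦ (hd.trans_le (Nat.le_of_dvd (Nat.pos_of_mem_divisors hl) h.1)).not_ge h.2

theorem abs_selbergWeight_le (hw : 1 ≤ w) {d : ℕ} (hd : d ∣ s.prodPrimes) :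
    |selbergWeight s w d| ≤ (s.nu d)⁻¹ := by
  have hS := selbergSum_pos s hw
  have hnu := nu_pos_of_dvd_prodPrimes hd
  have hterm (l) (hl : l ∈ s.prodPrimes.divisors) : 0 ≤ s.selbergTerms l :=
    (selbergTerms_pos (Nat.dvd_of_mem_divisors hl)).le
  have hsum : 0 ≤ ∑ l ∈ s.prodPrimes.divisors with d ∣ l ∧ l ≤ w, s.selbergTerms l :=
    sum_nonneg fun l hl ↦ hterm l (mem_filter.1 hl).1
  have hle : ∑ l ∈ s.prodPrimes.divisors with d ∣ l ∧ l ≤ w, s.selbergTerms l ≤ selbergSum s w :=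
    sum_le_sum_of_subset_of_nonneg (monotone_filter_right _ fun _ _ h ↦ h.2)
      fun l hl _ ↦ hterm l (mem_filter.1 hl).1
  have hmu : |(μ d : ℝ)| ≤ 1 := by exact_mod_cast ArithmeticFunction.abs_moebius_le_one
  rw [selbergWeight, abs_mul, abs_div, abs_of_pos (mul_pos hnu hS),
    abs_of_nonneg hsum]
  calc _ ≤ 1 / (s.nu d * selbergSum s w) * selbergSum s w := by gcongr
    _ = _ := by field_simp

theorem sum_nu_mul_selbergWeight {l : ℕ} (hl : l ∈ s.prodPrimes.divisors) :
    (∑ d ∈ s.prodPrimes.divisors, if l ∣ d then s.nu d * selbergWeight s w d else 0) =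
      if l ≤ w then μ l * s.selbergTerms l / selbergSum s w else 0 := by
  have hweight (d) (hd : d ∈ s.prodPrimes.divisors) : s.nu d * selbergWeight s w d =
      ∑ m ∈ s.prodPrimes.divisors with d ∣ m ∧ m ≤ w, s.selbergTerms m / selbergSum s w * μ d := by
    have hnu := nu_ne_zero (Nat.dvd_of_mem_divisors hd)
    rw [selbergWeight, ← sum_mul, ← sum_div, div_mul_eq_mul_div, ← mul_div_assoc,
      mul_div_mul_left _ _ hnu, mul_comm, mul_div_assoc, div_mul_eq_mul_div, mul_div_assoc]
  have hmoebius (m) (hm : m ∈ s.prodPrimes.divisors) :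
      ∑ d ∈ s.prodPrimes.divisors with l ∣ d ∧ d ∣ m, (μ d : ℝ) =
        if m = l then (μ l : ℝ) else 0 := by
    rw [← sum_divisors_filter_dvd_moebius l (squarefree_of_mem_divisors_prodPrimes hm),
      ← Nat.divisors_filter_dvd_of_dvd prodPrimes_ne_zero (Nat.dvd_of_mem_divisors hm),
      filter_filter]
    simp only [and_comm]
  calc _ = ∑ d ∈ s.prodPrimes.divisors with l ∣ d,
        ∑ m ∈ s.prodPrimes.divisors with d ∣ m ∧ m ≤ w,
          s.selbergTerms m / selbergSum s w * μ d := by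
        rw [← sum_filter]
        exact sum_congr rfl fun d hd ↦ hweight d (mem_filter.1 hd).1
    _ = ∑ m ∈ s.prodPrimes.divisors with m ≤ w,
        ∑ d ∈ s.prodPrimes.divisors with l ∣ d ∧ d ∣ m,
          s.selbergTerms m / selbergSum s w * μ d :=
        sum_comm' fun d m ↦ by simp only [mem_filter]; tauto
    _ = ∑ m ∈ s.prodPrimes.divisors with m ≤ w,
        if m = l then μ l * s.selbergTerms l / selbergSum s w else 0 := by
        refine sum_congr rfl fun m hm ↦ ?_
        rw [← mul_sum, hmoebius m (mem_filter.1 hm).1]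
        split_ifs with h
        · rw [h]
          ring
        · rw [mul_zero]
    _ = _ := by simp only [sum_ite_eq', mem_filter, hl, true_and]

theorem mainSum_selbergWeight (hw : 1 ≤ w) :
    s.mainSum (lambdaSquared (selbergWeight s w)) = (selbergSum s w)⁻¹ := by
  have hS := (selbergSum_pos s hw).ne'
  have hterm (l) (hl : l ∈ s.prodPrimes.divisors) : (s.selbergTerms l)⁻¹ *
      (∑ d ∈ s.prodPrimes.divisors, if l ∣ d then s.nu d * selbergWeight s w d else 0) ^ 2 =
        if l ≤ w then s.selbergTerms l / selbergSum s w ^ 2 else 0 := by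
    have hg := selbergTerms_pos (s := s) (Nat.dvd_of_mem_divisors hl)
    have hmu : (μ l : ℝ) ^ 2 = 1 := by
      exact_mod_cast ArithmeticFunction.moebius_sq_eq_one_of_squarefree
        (squarefree_of_mem_divisors_prodPrimes hl)
    rw [sum_nu_mul_selbergWeight s hl]
    split_ifs
    · rw [div_pow, mul_pow, hmu]
      field_simp
    · simp
  rw [mainSum_lambdaSquared_eq_sum_mul_sum_sq, sum_congr rfl hterm, ← sum_filter, ← sum_div]
  change selbergSum s w / _ = _
  field_simp

variable {E : ℝ} (hrem : ∀ d, d ∣ s.prodPrimes → |s.rem d| ≤ E * d)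
  (hnu : ∀ d, d ∣ s.prodPrimes → (s.nu d)⁻¹ ≤ d)
include hrem hnu

theorem errSum_selbergWeight_le (hw : 1 ≤ w) :
    s.errSum (lambdaSquared (selbergWeight s w)) ≤ E * w ^ 6 := by
  have hE : 0 ≤ E := by simpa using (abs_nonneg _).trans (hrem 1 (one_dvd _))
  have hweight (d) (hd : d ∣ s.prodPrimes) : |selbergWeight s w d| ≤ w := by
    rcases le_or_gt d w with hdw | hdw
    · exact (abs_selbergWeight_le s hw hd).trans ((hnu d hd).trans (Nat.cast_le.2 hdw))
    · simp [selbergWeight_eq_zero_of_lt s hdw]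
  have hterm (d) (hd : d ∈ s.prodPrimes.divisors) :
      |lambdaSquared (selbergWeight s w) d| * |s.rem d| ≤
        #(lcmPairs w d) * (w ^ 2 * (E * w ^ 2)) := by
    have hdP := Nat.dvd_of_mem_divisors hd
    refine (mul_le_mul_of_nonneg_right (abs_lambdaSquared_le
      (fun e ↦ selbergWeight_eq_zero_of_lt s) fun e he ↦ hweight e (he.trans hdP))
      (abs_nonneg _)).trans ?_
    rw [mul_assoc]
    obtain hempty | ⟨x, hx⟩ := (lcmPairs w d).eq_empty_or_nonempty
    · simp [hempty]
    · gcongr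
      refine (hrem d hdP).trans ?_
      gcongr
      exact_mod_cast le_sq_of_mem_lcmPairs hx
  calc s.errSum (lambdaSquared (selbergWeight s w))
      ≤ ∑ d ∈ s.prodPrimes.divisors, #(lcmPairs w d) * (w ^ 2 * (E * w ^ 2)) := sum_le_sum hterm
    _ ≤ w ^ 2 * (w ^ 2 * (E * w ^ 2)) := by
        rw [← sum_mul]
        gcongr
        exact_mod_cast sum_card_lcmPairs_le w s.prodPrimes.divisors
    _ = E * w ^ 6 := by ring

theorem siftedSum_le_selbergSum (hw : 1 ≤ w) :
    s.siftedSum ≤ s.totalMass * (selbergSum s w)⁻¹ + E * w ^ 6 := by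
  have hle := siftedSum_le_mainSum_errSum_of_upperMoebius (s := s) _
    (upperMoebius_lambdaSquared (selbergWeight s w) (selbergWeight_one s hw))
  rw [mainSum_selbergWeight s hw] at hle
  linarith [errSum_selbergWeight_le s hrem hnu hw]

end SelbergSieve

/-- The density `ρ(n) / n` of the solutions of `m ^ 2 + 1 ≡ 0 (mod n)`, as a multiplicative
function. -/
noncomputable def rhoDensity : ArithmeticFunction ℝ := ⟨fun n ↦ rho n / n, by simp⟩

theorem rhoDensity_apply (n : ℕ) : rhoDensity n = rho n / n := rfl

theorem rhoDensity_isMultiplicative : rhoDensity.IsMultiplicative := by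
  refine ⟨by simp [rhoDensity_apply, rho_one], fun h ↦ ?_⟩
  simp only [rhoDensity_apply, rho_mul h]
  push_cast
  exact mul_div_mul_comm ..

theorem rhoDensity_of_mod_four_eq_one {p : ℕ} (hp : p.Prime) (h : p % 4 = 1) :
    rhoDensity p = 2 / p := by
  rw [rhoDensity_apply, rho_prime hp, chi_of_mod_four_eq_one h]
  norm_num

theorem prime_of_mem_sievingPrimes {a w p : ℕ} (hp : p ∈ sievingPrimes a w) : p.Prime :=
  (mem_sievingPrimes.1 hp).1.2

theorem dvd_prod_sievingPrimes_iff {a w p : ℕ} (hp : p.Prime) :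
    p ∣ ∏ q ∈ sievingPrimes a w, q ↔ p ∈ sievingPrimes a w := by
  refine ⟨fun h ↦ ?_, fun h ↦ dvd_prod_of_mem _ h⟩
  obtain ⟨q, hq, hpq⟩ := (hp.prime.dvd_finsetProd_iff _).1 h
  rwa [(Nat.prime_dvd_prime_iff_eq hp (prime_of_mem_sievingPrimes hq)).1 hpq]

theorem rhoDensity_of_mem_sievingPrimes {a w p : ℕ} (hp : p ∈ sievingPrimes a w) :
    rhoDensity p = 2 / p :=
  rhoDensity_of_mod_four_eq_one (prime_of_mem_sievingPrimes hp) (mem_sievingPrimes.1 hp).2.1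

/-- The sieve problem for the values `n ^ 2 + 1`, `1 ≤ n ≤ N`, that are divisible by `a`,
sifted by the primes in `sievingPrimes a w`. -/
noncomputable def sqAddOneSieve (a N w : ℕ) : BoundingSieve where
  support := {n ∈ Icc 1 N | a ∣ n ^ 2 + 1}.image fun n ↦ n ^ 2 + 1
  prodPrimes := ∏ p ∈ sievingPrimes a w, p
  prodPrimes_squarefree := squarefree_prod_of_pairwise_isCoprime
    (fun _ hp _ hq hpq ↦ Nat.coprime_iff_isRelPrime.1 <| (Nat.coprime_primes
      (prime_of_mem_sievingPrimes hp) (prime_of_mem_sievingPrimes hq)).2 hpq)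
    fun _ hp ↦ (prime_of_mem_sievingPrimes hp).prime.squarefree
  weights := fun _ ↦ 1
  weights_nonneg := fun _ ↦ zero_le_one
  totalMass := N * (rho a / a)
  nu := rhoDensity
  nu_mult := rhoDensity_isMultiplicative
  nu_pos_of_prime p hp hdvd := by
    rw [rhoDensity_of_mem_sievingPrimes ((dvd_prod_sievingPrimes_iff hp).1 hdvd)]
    exact div_pos two_pos (Nat.cast_pos.2 hp.pos)
  nu_lt_one_of_prime p hp hdvd := by
    have hmem := (dvd_prod_sievingPrimes_iff hp).1 hdvd
    have hmod := (mem_sievingPrimes.1 hmem).2.1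
    have htwo := hp.two_le
    rw [rhoDensity_of_mem_sievingPrimes hmem, div_lt_one (Nat.cast_pos.2 hp.pos)]
    exact_mod_cast (by omega : 2 < p)

section SqAddOneSieve

variable {a N w d : ℕ}

theorem sum_support_sqAddOneSieve (P : ℕ → Prop) [DecidablePred P] :
    (∑ m ∈ (sqAddOneSieve a N w).support, if P m then (sqAddOneSieve a N w).weights m else 0) =
      #{n ∈ Icc 1 N | a ∣ n ^ 2 + 1 ∧ P (n ^ 2 + 1)} := by
  have hinj : Function.Injective fun n : ℕ ↦ n ^ 2 + 1 := fun m n h ↦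
    Nat.pow_left_injective two_ne_zero (Nat.succ_injective h)
  simp only [sqAddOneSieve]
  rw [sum_image hinj.injOn, ← sum_filter, sum_const, nsmul_one, filter_filter]

theorem siftedSum_sqAddOneSieve : (sqAddOneSieve a N w).siftedSum =
    #{n ∈ Icc 1 N | a ∣ n ^ 2 + 1 ∧ ∀ p ∈ sievingPrimes a w, ¬ p ∣ n ^ 2 + 1} := by
  rw [BoundingSieve.siftedSum, sum_support_sqAddOneSieve]
  congr 2
  refine filter_congr fun n _ ↦ and_congr_right fun _ ↦ ?_
  rw [Nat.Coprime, ← Nat.Coprime, sqAddOneSieve, Nat.coprime_prod_left_iff]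
  exact forall₂_congr fun p hp ↦ (prime_of_mem_sievingPrimes hp).coprime_iff_not_dvd

theorem coprime_of_dvd_prodPrimes_sqAddOneSieve (hd : d ∣ (sqAddOneSieve a N w).prodPrimes) :
    a.Coprime d :=
  Nat.coprime_of_dvd fun _ hp hpa hpd ↦
    (mem_sievingPrimes.1 ((dvd_prod_sievingPrimes_iff hp).1 (hpd.trans hd))).2.2 hpa

theorem abs_rem_sqAddOneSieve_le (ha : 0 < a) (hd : d ∣ (sqAddOneSieve a N w).prodPrimes) :
    |(sqAddOneSieve a N w).rem d| ≤ rho a * d := by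
  have hd0 : 0 < d := Nat.pos_of_dvd_of_pos hd (Nat.pos_of_ne_zero BoundingSieve.prodPrimes_ne_zero)
  have hcop := coprime_of_dvd_prodPrimes_sqAddOneSieve hd
  have hrem : (sqAddOneSieve a N w).rem d =
      #{n ∈ Icc 1 N | a * d ∣ n ^ 2 + 1} - N * (rho (a * d) / (a * d : ℕ)) := by
    rw [BoundingSieve.rem, BoundingSieve.multSum, sum_support_sqAddOneSieve]
    congr 1
    · congr 2
      refine filter_congr fun n _ ↦ ⟨fun h ↦ hcop.mul_dvd_of_dvd_of_dvd h.1 h.2, fun h ↦ ?_⟩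
      exact ⟨dvd_of_mul_right_dvd h, dvd_of_mul_left_dvd h⟩
    · simp only [sqAddOneSieve, rhoDensity_apply, rho_mul hcop]
      push_cast
      field_simp
  calc |(sqAddOneSieve a N w).rem d| ≤ rho (a * d) := by
        rw [hrem]
        exact abs_card_dvd_sq_add_one_sub_le (Nat.mul_pos ha hd0) N
    _ = rho a * rho d := by rw [rho_mul hcop, Nat.cast_mul]
    _ ≤ rho a * d := by
        gcongr
        exact rho_le_self hd0

theorem inv_nu_sqAddOneSieve_le (hd : d ∣ (sqAddOneSieve a N w).prodPrimes) :
    ((sqAddOneSieve a N w).nu d)⁻¹ ≤ d := by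
  have hnu := BoundingSieve.nu_pos_of_dvd_prodPrimes hd
  change 0 < (rho d : ℝ) / d at hnu
  change ((rho d : ℝ) / d)⁻¹ ≤ d
  have hrho : rho d ≠ 0 := fun h ↦ by simp [h] at hnu
  rw [inv_div]
  exact div_le_self d.cast_nonneg (Nat.one_le_cast.2 (Nat.one_le_iff_ne_zero.2 hrho))

theorem subsetProdSum_le_selbergSum_sqAddOneSieve :
    subsetProdSum sieveWeight (sievingPrimes a w) w ≤ selbergSum (sqAddOneSieve a N w) w := by
  set s := sqAddOneSieve a N w
  set T := sievingPrimes a w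
  have hfactors {t} (ht : t ⊆ T) : (∏ p ∈ t, p).primeFactors = t :=
    Nat.primeFactors_prod fun p hp ↦ prime_of_mem_sievingPrimes (ht hp)
  have hdvd {t} (ht : t ⊆ T) : ∏ p ∈ t, p ∣ s.prodPrimes := prod_dvd_prod_of_subset _ _ _ ht
  have hterm {t} (ht : t ⊆ T) : ∏ p ∈ t, sieveWeight p = s.selbergTerms (∏ p ∈ t, p) := by
    rw [BoundingSieve.selbergTerms_apply, ← BoundingSieve.prod_primeFactors_nu (hdvd ht),
      hfactors ht, ← prod_mul_distrib]
    refine prod_congr rfl fun p hp ↦ ?_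
    change _ = rhoDensity p * (1 - rhoDensity p)⁻¹
    rw [rhoDensity_of_mem_sievingPrimes (ht hp), sieveWeight]
  have hsubset {t} (ht : t ∈ {t ∈ T.powerset | ∏ p ∈ t, p ≤ w}) : t ⊆ T :=
    mem_powerset.1 (mem_filter.1 ht).1
  have hinj : Set.InjOn (fun t : Finset ℕ ↦ ∏ p ∈ t, p)
      ({t ∈ T.powerset | ∏ p ∈ t, p ≤ w} : Finset (Finset ℕ)) := fun t ht t' ht' h ↦ by
    rw [← hfactors (hsubset ht), ← hfactors (hsubset ht')]
    exact congrArg Nat.primeFactors h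
  rw [subsetProdSum, sum_congr rfl fun t ht ↦ hterm (hsubset ht), ← sum_image hinj]
  refine sum_le_sum_of_subset_of_nonneg (fun l hl ↦ ?_) fun l hl _ ↦
    (BoundingSieve.selbergTerms_pos (Nat.dvd_of_mem_divisors (mem_filter.1 hl).1)).le
  obtain ⟨t, ht, rfl⟩ := mem_image.1 hl
  exact mem_filter.2 ⟨Nat.mem_divisors.2 ⟨hdvd (hsubset ht), BoundingSieve.prodPrimes_ne_zero⟩,
    (mem_filter.1 ht).2⟩

end SqAddOneSieve

theorem prod_sqEulerFactor_pos (a : ℕ) : 0 < ∏ p ∈ a.primeFactors, sqEulerFactor p :=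
  prod_pos fun _ hp ↦ zero_lt_one.trans_le (one_le_sqEulerFactor (Nat.prime_of_mem_primeFactors hp))

/-- The function `f` for which the sieve bounds the number of `n ≤ N` such that `a ∣ n ^ 2 + 1`
and `(n ^ 2 + 1) / a` is free of small primes by a multiple of `N * f a / log w`. -/
noncomputable def sieveDensity (a : ℕ) : ℝ := rho a / a * ∏ p ∈ a.primeFactors, sqEulerFactor p

theorem sieveDensity_nonneg (a : ℕ) : 0 ≤ sieveDensity a :=
  mul_nonneg (by positivity) (prod_sqEulerFactor_pos a).le

theorem card_sifted_sq_add_one_le {a w : ℕ} (ha : 0 < a) (hw : 2 ≤ w) (N : ℕ) :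
    (#{n ∈ Icc 1 N | a ∣ n ^ 2 + 1 ∧ ∀ p ∈ sievingPrimes a w, ¬ p ∣ n ^ 2 + 1} : ℝ) ≤
      12 * N / log w * sieveDensity a + rho a * w ^ 6 := by
  set s := sqAddOneSieve a N w
  set K := ∏ p ∈ a.primeFactors, sqEulerFactor p
  have hw1 : 1 ≤ w := by omega
  have hK : 0 < K := prod_sqEulerFactor_pos a
  have hlog : 0 < log w := log_pos (Nat.one_lt_cast.2 hw)
  have hS := selbergSum_pos s hw1
  have hinv : (selbergSum s w)⁻¹ ≤ 12 * K / log w := by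
    have hlower : 2 / 3 * log w ≤ 8 * K * selbergSum s w :=
      (two_thirds_log_le_subsetProdSum_sieveWeight ha.ne' hw1).trans
        (by gcongr; exact subsetProdSum_le_selbergSum_sqAddOneSieve)
    rw [inv_le_comm₀ hS (by positivity), inv_div, div_le_iff₀ (by positivity)]
    linarith
  calc _ = s.siftedSum := siftedSum_sqAddOneSieve.symm
    _ ≤ N * (rho a / a) * (selbergSum s w)⁻¹ + rho a * w ^ 6 :=
        siftedSum_le_selbergSum s (fun _ ↦ abs_rem_sqAddOneSieve_le ha)
          (fun _ ↦ inv_nu_sqAddOneSieve_le) hw1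
    _ ≤ N * (rho a / a) * (12 * K / log w) + rho a * w ^ 6 := by gcongr
    _ = _ := by
        rw [sieveDensity]
        ring

/-! ### Sums over smooth numbers -/

open scoped Nat in
theorem factorial_mul_sum_powersetCard_prod_le {α : Type*} {F : α → ℝ} (hF : ∀ a, 0 ≤ F a)
    (Q : Finset α) (j : ℕ) :
    (j ! : ℝ) * ∑ s ∈ Q.powersetCard j, ∏ q ∈ s, F q ≤ (∑ q ∈ Q, F q) ^ j := by
  classical
  let expo (s : Finset α) (q : α) : ℕ := if q ∈ s then 1 else 0
  have hinj : Function.Injective expo := fun s t h ↦ by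
    ext q
    have := congrFun h q
    by_cases hs : q ∈ s <;> by_cases ht : q ∈ t <;> simp_all [expo]
  have hsub {s : Finset α} (hs : s ∈ Q.powersetCard j) : Q ∩ s = s :=
    inter_eq_right.2 (mem_powersetCard.1 hs).1
  have hsum {s : Finset α} (hs : s ∈ Q.powersetCard j) : ∑ q ∈ Q, expo s q = j := by
    rw [sum_ite_mem, hsub hs, sum_const, smul_eq_mul, mul_one, (mem_powersetCard.1 hs).2]
  have hterm (s) (hs : s ∈ Q.powersetCard j) : (j ! : ℝ) * ∏ q ∈ s, F q =
      Nat.multinomial Q (expo s) * ∏ q ∈ Q, F q ^ expo s q := by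
    have hfact : ∏ q ∈ Q, (expo s q)! = 1 := prod_eq_one fun q _ ↦ by
      simp only [expo]
      split_ifs <;> rfl
    have hmult := Nat.multinomial_spec Q (expo s)
    rw [hfact, one_mul, hsum hs] at hmult
    rw [hmult]
    simp only [expo, pow_ite, pow_one, pow_zero]
    rw [prod_ite_mem, hsub hs]
  rw [sum_pow_eq_sum_piAntidiag, mul_sum, sum_congr rfl hterm, ← sum_image (g := expo)
    (f := fun k ↦ (Nat.multinomial Q k : ℝ) * ∏ q ∈ Q, F q ^ k q) hinj.injOn]
  refine sum_le_sum_of_subset_of_nonneg (fun k hk ↦ ?_) fun k _ _ ↦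
    mul_nonneg (Nat.cast_nonneg _) (prod_nonneg fun q _ ↦ pow_nonneg (hF q) _)
  obtain ⟨s, hs, rfl⟩ := mem_image.1 hk
  refine mem_piAntidiag.2 ⟨hsum hs, fun q hq ↦ (mem_powersetCard.1 hs).1 ?_⟩
  by_contra hqs
  exact hq (if_neg hqs)

open scoped Nat in
-- A product of `j` prime powers is one of the `j !` equal terms in the expansion of the power.
theorem factorial_mul_sum_le_pow {f : ArithmeticFunction ℝ} (hf0 : ∀ n, 0 ≤ f n)
    (hf : f.IsMultiplicative) {z V j : ℕ} {A : Finset ℕ}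
    (hA : ∀ a ∈ A, a ≠ 0 ∧ a.primeFactors ⊆ Nat.primesLE z ∧ #a.primeFactors = j ∧ a ≤ V) :
    (j ! : ℝ) * ∑ a ∈ A, f a ≤ (∑ p ∈ Nat.primesLE z, ∑ v ∈ Icc 1 V, f (p ^ v)) ^ j := by
  let graph (a : ℕ) : Finset (ℕ × ℕ) := a.primeFactors.image fun p ↦ (p, a.factorization p)
  have hpair (a : ℕ) : Function.Injective fun p ↦ (p, a.factorization p) :=
    fun _ _ h ↦ congrArg Prod.fst h
  have hprod (a) (ha : a ∈ A) : ∏ x ∈ graph a, x.1 ^ x.2 = a := by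
    rw [prod_image (hpair a).injOn]
    exact Nat.prod_factorization_pow_eq_self (hA a ha).1
  have hterm (a) (ha : a ∈ A) : f a = ∏ x ∈ graph a, f (x.1 ^ x.2) := by
    rw [prod_image (hpair a).injOn, hf.multiplicative_factorization _ (hA a ha).1]
    rfl
  have hinj : Set.InjOn graph A := fun a ha b hb h ↦ by rw [← hprod a ha, ← hprod b hb, h]
  have hgraph : A.image graph ⊆ (Nat.primesLE z ×ˢ Icc 1 V).powersetCard j := by
    intro s hs
    obtain ⟨a, ha, rfl⟩ := mem_image.1 hs
    obtain ⟨ha0, hz, hj, hV⟩ := hA a ha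
    refine mem_powersetCard.2 ⟨fun x hx ↦ ?_, by rw [card_image_of_injective _ (hpair a), hj]⟩
    obtain ⟨p, hp, rfl⟩ := mem_image.1 hx
    exact mem_product.2 ⟨hz hp, mem_Icc.2
      ⟨(Nat.prime_of_mem_primeFactors hp).factorization_pos_of_dvd ha0
        (Nat.dvd_of_mem_primeFactors hp), (Nat.factorization_lt p ha0).le.trans hV⟩⟩
  calc (j ! : ℝ) * ∑ a ∈ A, f a = j ! * ∑ s ∈ A.image graph, ∏ x ∈ s, f (x.1 ^ x.2) := by
        rw [sum_image hinj, sum_congr rfl hterm]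
    _ ≤ j ! * ∑ s ∈ (Nat.primesLE z ×ˢ Icc 1 V).powersetCard j, ∏ x ∈ s, f (x.1 ^ x.2) := by
        gcongr
        exact fun s _ _ ↦ prod_nonneg fun x _ ↦ hf0 _
    _ ≤ (∑ x ∈ Nat.primesLE z ×ˢ Icc 1 V, f (x.1 ^ x.2)) ^ j :=
        factorial_mul_sum_powersetCard_prod_le (fun x ↦ hf0 _) _ j
    _ = _ := by rw [sum_product]

/-- The function `n ↦ sieveDensity n * n ^ β`, as a multiplicative function. -/
noncomputable def rpowSieveDensity (β : ℝ) : ArithmeticFunction ℝ :=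
  ⟨fun n ↦ sieveDensity n * (n : ℝ) ^ β, by simp [sieveDensity]⟩

theorem rpowSieveDensity_apply (β : ℝ) (n : ℕ) :
    rpowSieveDensity β n = sieveDensity n * (n : ℝ) ^ β := rfl

theorem rpowSieveDensity_nonneg (β : ℝ) (n : ℕ) : 0 ≤ rpowSieveDensity β n :=
  mul_nonneg (sieveDensity_nonneg n) (by positivity)

theorem rpowSieveDensity_isMultiplicative (β : ℝ) : (rpowSieveDensity β).IsMultiplicative := by
  refine ⟨by simp [rpowSieveDensity_apply, sieveDensity, rho_one], fun {m n} h ↦ ?_⟩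
  simp only [rpowSieveDensity_apply, sieveDensity]
  rw [rho_mul h, h.primeFactors_mul, prod_union h.disjoint_primeFactors, Nat.cast_mul, Nat.cast_mul,
    mul_rpow m.cast_nonneg n.cast_nonneg, mul_div_mul_comm]
  ring

theorem sieveDensity_prime_pow {p v : ℕ} (hp : p.Prime) (hv : v ≠ 0) :
    sieveDensity (p ^ v) = rho (p ^ v) / (p : ℝ) ^ v * sqEulerFactor p := by
  rw [sieveDensity, Nat.primeFactors_prime_pow hv hp, prod_singleton, Nat.cast_pow]

theorem sqEulerFactor_le {p : ℕ} (hp : p.Prime) : sqEulerFactor p ≤ 1 + 6 / p := by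
  have hhalf := natCast_prime_inv_le_half hp
  have hpos : 0 < (p : ℝ)⁻¹ := inv_pos.2 (Nat.cast_pos.2 hp.pos)
  rw [sqEulerFactor, div_eq_mul_inv 6]
  set t := (p : ℝ)⁻¹
  have hsub : 0 < 1 - t := by linarith
  rw [inv_le_iff_one_le_mul₀ (by positivity)]
  nlinarith [mul_nonneg hpos.le
    (mul_nonneg (by linarith : 0 ≤ 1 / 2 - t) (by linarith : 0 ≤ 4 / 3 - t))]

theorem sqEulerFactor_le_four {p : ℕ} (hp : p.Prime) : sqEulerFactor p ≤ 4 := by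
  have hhalf := natCast_prime_inv_le_half hp
  have hle := sqEulerFactor_le hp
  rw [div_eq_mul_inv] at hle
  linarith

theorem rpowSieveDensity_prime_pow_le {p v : ℕ} {β : ℝ} (hp : p.Prime) (hv : v ≠ 0)
    (hβ : β ≤ 1 / 4) : rpowSieveDensity β (p ^ v) ≤ 8 * ((p : ℝ) ^ (-(3 / 4) : ℝ)) ^ v := by
  have hp0 : (0 : ℝ) < p := Nat.cast_pos.2 hp.pos
  have hp1 : (1 : ℝ) ≤ p := Nat.one_le_cast.2 hp.one_le
  have hrho : (rho (p ^ v) : ℝ) ≤ 2 := mod_cast rho_prime_pow_le hp v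
  have hrpow : ((p ^ v : ℕ) : ℝ) ^ β ≤ ((p : ℝ) ^ (1 / 4 : ℝ)) ^ v := by
    rw [Nat.cast_pow, ← rpow_pow_comm hp0.le]
    gcongr
  have hfactor_nonneg : 0 ≤ sqEulerFactor p := zero_le_one.trans (one_le_sqEulerFactor hp)
  rw [rpowSieveDensity_apply, sieveDensity_prime_pow hp hv]
  calc _ ≤ 2 / (p : ℝ) ^ v * 4 * ((p : ℝ) ^ (1 / 4 : ℝ)) ^ v := by
        gcongr
        exact sqEulerFactor_le_four hp
    _ = 8 * ((p : ℝ) ^ (-1 : ℝ) * (p : ℝ) ^ (1 / 4 : ℝ)) ^ v := by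
        rw [rpow_neg_one, mul_pow, inv_pow]
        ring
    _ = 8 * ((p : ℝ) ^ (-(3 / 4) : ℝ)) ^ v := by
        rw [← rpow_add hp0]
        norm_num

theorem rpow_neg_three_quarters_le {x : ℝ} (hx : 2 ≤ x) : x ^ (-(3 / 4) : ℝ) ≤ 2 / 3 := by
  have hx0 : 0 < x := by linarith
  refine le_of_pow_le_pow_left₀ (n := 4) (by norm_num) (by norm_num) ?_
  calc (x ^ (-(3 / 4) : ℝ)) ^ 4 = (x ^ 3)⁻¹ := by
        rw [← rpow_mul_natCast hx0.le, ← rpow_natCast x 3, ← rpow_neg hx0.le]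
        norm_num
    _ ≤ (2 ^ 3)⁻¹ := by gcongr
    _ ≤ (2 / 3) ^ 4 := by norm_num

theorem sum_rpowSieveDensity_Ico_two_le {p : ℕ} {β : ℝ} (hp : p.Prime) (hβ : β ≤ 1 / 4) (V : ℕ) :
    ∑ v ∈ Ico 2 V, rpowSieveDensity β (p ^ v) ≤ 24 * (p : ℝ) ^ (-(3 / 2) : ℝ) := by
  set q := (p : ℝ) ^ (-(3 / 4) : ℝ) with hq
  have hp0 : (0 : ℝ) < p := Nat.cast_pos.2 hp.pos
  have hq0 : 0 < q := by positivity
  have hq1 : q ≤ 2 / 3 := rpow_neg_three_quarters_le (Nat.ofNat_le_cast.2 hp.two_le)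
  have hsq : q ^ 2 = (p : ℝ) ^ (-(3 / 2) : ℝ) := by
    rw [hq, ← rpow_mul_natCast hp0.le]
    norm_num
  calc ∑ v ∈ Ico 2 V, rpowSieveDensity β (p ^ v) ≤ ∑ v ∈ Ico 2 V, 8 * q ^ v :=
        sum_le_sum fun v hv ↦ rpowSieveDensity_prime_pow_le hp
          (by have := (mem_Ico.1 hv).1; omega) hβ
    _ ≤ 8 * (q ^ 2 / (1 - q)) := by
        rw [← mul_sum]
        gcongr
        exact geom_sum_Ico_le_of_lt_one hq0.le (by linarith)
    _ ≤ 8 * (q ^ 2 / (1 / 3)) := by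
        gcongr
        linarith
    _ = 24 * (p : ℝ) ^ (-(3 / 2) : ℝ) := by
        rw [← hsq]
        ring

theorem exp_le_one_add_exp_mul {u M : ℝ} (hu : 0 ≤ u) (huM : u ≤ M) :
    exp u ≤ 1 + exp M * u := by
  have hmul : exp u * (1 - u) ≤ 1 :=
    calc exp u * (1 - u) ≤ exp u * exp (-u) := by
          gcongr
          exact one_sub_le_exp_neg u
      _ = 1 := by rw [← exp_add, add_neg_cancel, exp_zero]
  have hle : exp u * u ≤ exp M * u := by gcongr
  linarith

theorem rpowSieveDensity_prime_le {p : ℕ} {β M : ℝ} (hp : p.Prime) (hβ0 : 0 ≤ β)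
    (hβ : β ≤ 1 / 4) (hM : β * log p ≤ M) :
    rpowSieveDensity β p ≤
      (1 + chi p) / p + 2 * exp M * β * (log p / p) + 12 * (p : ℝ) ^ (-(3 / 2) : ℝ) := by
  have hp0 : (0 : ℝ) < p := Nat.cast_pos.2 hp.pos
  have hp1 : (1 : ℝ) ≤ p := Nat.one_le_cast.2 hp.one_le
  have hlog : 0 ≤ log p := log_nonneg hp1
  obtain ⟨hchi_ge, hchi_le⟩ := abs_le.1 (abs_chi_le_one p)
  have hchi0 : 0 ≤ 1 + chi p := by linarith
  have hchi2 : 1 + chi p ≤ 2 := by linarith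
  have hrpow : (p : ℝ) ^ β ≤ 1 + exp M * (β * log p) := by
    rw [rpow_def_of_pos hp0, mul_comm (log _)]
    exact exp_le_one_add_exp_mul (mul_nonneg hβ0 hlog) hM
  have hrpow_half : (p : ℝ) ^ β ≤ (p : ℝ) ^ (1 / 2 : ℝ) :=
    rpow_le_rpow_of_exponent_le hp1 (by linarith)
  have hsplit : (p : ℝ) ^ (-(3 / 2) : ℝ) = 1 / p * (1 / p) * (p : ℝ) ^ (1 / 2 : ℝ) := by
    rw [one_div, ← rpow_neg_one, ← rpow_add hp0, ← rpow_add hp0]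
    norm_num
  have hdensity : sieveDensity p = (1 + chi p) / p * sqEulerFactor p := by
    simpa [rho_prime hp] using sieveDensity_prime_pow hp one_ne_zero
  rw [rpowSieveDensity_apply, hdensity]
  calc (1 + chi p) / p * sqEulerFactor p * (p : ℝ) ^ β
      ≤ (1 + chi p) / p * (1 + 6 / p) * (p : ℝ) ^ β := by
        gcongr
        exact sqEulerFactor_le hp
    _ = (1 + chi p) / p * (p : ℝ) ^ β + (1 + chi p) * (6 / p / p) * (p : ℝ) ^ β := by ring
    _ ≤ (1 + chi p) / p * (1 + exp M * (β * log p)) + 2 * (6 / p / p) * (p : ℝ) ^ (1 / 2 : ℝ) := by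
        gcongr
    _ = (1 + chi p) / p + (1 + chi p) * (exp M * β * (log p / p)) +
          2 * (6 / p / p) * (p : ℝ) ^ (1 / 2 : ℝ) := by ring
    _ ≤ (1 + chi p) / p + 2 * (exp M * β * (log p / p)) +
          2 * (6 / p / p) * (p : ℝ) ^ (1 / 2 : ℝ) := by gcongr
    _ = _ := by
        rw [hsplit]
        ring

theorem sum_rpowSieveDensity_prime_pow_le {p : ℕ} {β M : ℝ} (hp : p.Prime) (hβ0 : 0 ≤ β)
    (hβ : β ≤ 1 / 4) (hM : β * log p ≤ M) (V : ℕ) :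
    ∑ v ∈ Icc 1 V, rpowSieveDensity β (p ^ v) ≤
      (1 + chi p) / p + 2 * exp M * β * (log p / p) + 36 * (p : ℝ) ^ (-(3 / 2) : ℝ) := by
  have hsubset : Icc 1 V ⊆ insert 1 (Ico 2 (V + 1)) := fun v hv ↦ by
    simp only [mem_Icc, mem_insert, mem_Ico] at hv ⊢
    omega
  calc ∑ v ∈ Icc 1 V, rpowSieveDensity β (p ^ v)
      ≤ ∑ v ∈ insert 1 (Ico 2 (V + 1)), rpowSieveDensity β (p ^ v) :=
        sum_le_sum_of_subset_of_nonneg hsubset fun _ _ _ ↦ rpowSieveDensity_nonneg _ _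
    _ = rpowSieveDensity β p + ∑ v ∈ Ico 2 (V + 1), rpowSieveDensity β (p ^ v) := by
        rw [sum_insert (by simp), pow_one]
    _ ≤ _ := by
        linarith [rpowSieveDensity_prime_le hp hβ0 hβ hM,
          sum_rpowSieveDensity_Ico_two_le hp hβ (V + 1)]

theorem exists_sum_sum_rpowSieveDensity_le (M : ℝ) : ∃ C : ℝ, 0 ≤ C ∧ ∀ (z V : ℕ) (β : ℝ),
    2 ≤ z → 0 ≤ β → β ≤ 1 / 4 → β * log z ≤ M →
      ∑ p ∈ Nat.primesLE z, ∑ v ∈ Icc 1 V, rpowSieveDensity β (p ^ v) ≤ log (log z) + C := by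
  obtain ⟨C₁, hC₁⟩ := exists_sum_one_add_chi_div_le
  have hsummable : Summable fun n : ℕ ↦ (n : ℝ) ^ (-(3 / 2) : ℝ) :=
    summable_nat_rpow.2 (by norm_num)
  set C₂ := ∑' n : ℕ, (n : ℝ) ^ (-(3 / 2) : ℝ)
  refine ⟨|C₁ + 2 * exp M * (M + log 4) + 36 * C₂|, abs_nonneg _, fun z V β hz hβ0 hβ hM ↦ ?_⟩
  have hlog4 : 0 ≤ log 4 := log_nonneg (by norm_num)
  have hlog_sum : β * ∑ p ∈ Nat.primesLE z, log p / p ≤ M + log 4 :=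
    calc β * ∑ p ∈ Nat.primesLE z, log p / p ≤ β * (log z + log 4) := by
          gcongr
          exact sum_log_div_le z
      _ ≤ M + log 4 := by nlinarith
  have hrpow_sum : ∑ p ∈ Nat.primesLE z, (p : ℝ) ^ (-(3 / 2) : ℝ) ≤ C₂ :=
    hsummable.sum_le_tsum _ fun _ _ ↦ by positivity
  calc ∑ p ∈ Nat.primesLE z, ∑ v ∈ Icc 1 V, rpowSieveDensity β (p ^ v)
      ≤ ∑ p ∈ Nat.primesLE z, ((1 + chi p) / p + 2 * exp M * β * (log p / p) +
          36 * (p : ℝ) ^ (-(3 / 2) : ℝ)) := sum_le_sum fun p hp ↦ by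
        obtain ⟨hpz, hp⟩ := Nat.mem_primesLE.1 hp
        refine sum_rpowSieveDensity_prime_pow_le hp hβ0 hβ (hM.trans' ?_) V
        gcongr
        exact_mod_cast hp.pos
    _ = ∑ p ∈ Nat.primesLE z, (1 + chi p) / p +
          2 * exp M * (β * ∑ p ∈ Nat.primesLE z, log p / p) +
          36 * ∑ p ∈ Nat.primesLE z, (p : ℝ) ^ (-(3 / 2) : ℝ) := by
        rw [sum_add_distrib, sum_add_distrib, ← mul_sum, ← mul_sum]
        ring
    _ ≤ (log (log z) + C₁) + 2 * exp M * (M + log 4) + 36 * C₂ := by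
        gcongr
        exact hC₁ z hz
    _ ≤ log (log z) + |C₁ + 2 * exp M * (M + log 4) + 36 * C₂| := by
        linarith [le_abs_self (C₁ + 2 * exp M * (M + log 4) + 36 * C₂)]

open scoped Nat in
/-- `W` bounds the sums of `rpowSieveDensity β` over the `z`-smooth numbers in the way that the sum
of `rpowSieveDensity β` over the powers of the primes `p ≤ z` does: the numbers with exactly `j`
prime factors contribute at most `W ^ j / j !`. -/
def IsSmoothSumBound (z : ℕ) (β W : ℝ) : Prop :=
  ∀ (j : ℕ) (A : Finset ℕ),
    (∀ a ∈ A, a ≠ 0 ∧ a.primeFactors ⊆ Nat.primesLE z ∧ #a.primeFactors = j) →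
    ∑ a ∈ A, rpowSieveDensity β a ≤ W ^ j / j !

theorem IsSmoothSumBound.nonneg {z : ℕ} {β W : ℝ} (h : IsSmoothSumBound z β W) : 0 ≤ W := by
  simpa using h 1 ∅ (by simp)

theorem IsSmoothSumBound.mono {z : ℕ} {β W U : ℝ} (h : IsSmoothSumBound z β W) (hWU : W ≤ U) :
    IsSmoothSumBound z β U := fun j A hA ↦ (h j A hA).trans <| by
  have := h.nonneg
  gcongr

theorem exists_isSmoothSumBound (M : ℝ) : ∃ C : ℝ, 0 ≤ C ∧ ∀ (z : ℕ) (β : ℝ), 2 ≤ z → 0 ≤ β →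
    β ≤ 1 / 4 → β * log z ≤ M → IsSmoothSumBound z β (log (log z) + C) := by
  obtain ⟨C, hC0, hC⟩ := exists_sum_sum_rpowSieveDensity_le M
  refine ⟨C, hC0, fun z β hz hβ0 hβ hM j A hA ↦ ?_⟩
  have hA' (a) (ha : a ∈ A) : a ≠ 0 ∧ a.primeFactors ⊆ Nat.primesLE z ∧ #a.primeFactors = j ∧
      a ≤ A.sup id := by
    obtain ⟨ha0, hz, hj⟩ := hA a ha
    exact ⟨ha0, hz, hj, le_sup (f := id) ha⟩
  rw [le_div_iff₀ (by positivity), mul_comm]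
  refine (factorial_mul_sum_le_pow (rpowSieveDensity_nonneg β)
    (rpowSieveDensity_isMultiplicative β) hA').trans ?_
  gcongr
  · exact sum_nonneg fun _ _ ↦ sum_nonneg fun _ _ ↦ rpowSieveDensity_nonneg β _
  · exact hC z _ β hz hβ0 hβ hM

open scoped Nat in
theorem pow_div_factorial_le {R U : ℝ} {k : ℕ} (hR : 0 ≤ R) (hU : 0 ≤ U) (hk : k ≤ R * U) (j : ℕ) :
    ∀ i, j + i < k → U ^ j / j ! ≤ R ^ i * (U ^ (j + i) / (j + i)!)
  | 0, _ => by simp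
  | i + 1, hi => by
    have hle : ((j + i + 1 : ℕ) : ℝ) ≤ R * U := (Nat.cast_le.2 hi.le).trans hk
    have hstep : U ^ (j + i) / (j + i)! ≤ R * (U ^ (j + (i + 1)) / (j + (i + 1))!) := by
      calc U ^ (j + i) / (j + i)!
          = ((j + i + 1 : ℕ) : ℝ) * U ^ (j + i) / (j + i + 1)! := by
            rw [Nat.factorial_succ, Nat.cast_mul, mul_div_mul_left _ _ (by positivity)]
        _ ≤ R * U * U ^ (j + i) / (j + i + 1)! := by gcongr
        _ = R * (U ^ (j + (i + 1)) / (j + (i + 1))!) := by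
            rw [← add_assoc, pow_succ]
            ring
    calc U ^ j / j ! ≤ R ^ i * (U ^ (j + i) / (j + i)!) :=
          pow_div_factorial_le hR hU hk j i (by omega)
      _ ≤ R ^ i * (R * (U ^ (j + (i + 1)) / (j + (i + 1))!)) := by gcongr
      _ = _ := by ring

/-! ### Smooth-rough factorisations -/

/-- `m = a * b` with `a` and `b` coprime, where `a ∈ [Y, D]` has only prime factors `≤ z` and `b`
has only prime factors `> w`. -/
def HasSmoothRoughSplit (z w D : ℕ) (Y : ℝ) (m : ℕ) : Prop :=
  ∃ a b : ℕ, a * b = m ∧ a.Coprime b ∧ (∀ p ∈ a.primeFactors, p ≤ z) ∧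
    (∀ p ∈ b.primeFactors, w < p) ∧ Y ≤ a ∧ a ≤ D

noncomputable instance (z w D : ℕ) (Y : ℝ) : DecidablePred (HasSmoothRoughSplit z w D Y) :=
  Classical.decPred _

/-- The integers `n ∈ (D, N]` with `ω (n ^ 2 + 1) = k` that the sieve handles through a
smooth-rough factorisation of `n ^ 2 + 1`. -/
noncomputable def splitSet (N k z w D : ℕ) (Y : ℝ) : Finset ℕ :=
  {n ∈ Ioc D N | #(n ^ 2 + 1).primeFactors = k ∧ HasSmoothRoughSplit z w D Y (n ^ 2 + 1)}

open scoped Classical in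
/-- The possible smooth factors `a` of `n ^ 2 + 1` for `n` in a `splitSet`, when the rough cofactor
has between `1` and `J` prime factors. -/
noncomputable def smoothFactors (k z D J : ℕ) (Y : ℝ) : Finset ℕ :=
  {a ∈ Icc 1 D | Y ≤ a ∧ (∀ p ∈ a.primeFactors, p ≤ z) ∧ #a.primeFactors < k ∧
    k ≤ #a.primeFactors + J}

theorem card_primeFactors_le_of_lt_pow {w b J : ℕ} (hw : 1 < w) (hb : b ≠ 0)
    (hrough : ∀ p ∈ b.primeFactors, w < p) (hlt : b < w ^ (J + 1)) : #b.primeFactors ≤ J := by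
  have hpow : w ^ #b.primeFactors ≤ b :=
    calc w ^ #b.primeFactors ≤ ∏ p ∈ b.primeFactors, p :=
          pow_card_le_prod _ _ _ fun p hp ↦ (hrough p hp).le
      _ ≤ b := Nat.le_of_dvd (Nat.pos_of_ne_zero hb) (Nat.prod_primeFactors_dvd b)
  exact Nat.lt_succ_iff.1 ((Nat.pow_lt_pow_iff_right hw).1 (hpow.trans_lt hlt))

section SplitSet

variable {N k z w D J : ℕ} {Y : ℝ}

theorem splitSet_subset_biUnion (hw : 2 ≤ w) (hJ : 2 * N ^ 2 < w ^ (J + 1)) :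
    splitSet N k z w D Y ⊆ (smoothFactors k z D J Y).biUnion fun a ↦
      {n ∈ Icc 1 N | a ∣ n ^ 2 + 1 ∧ ∀ p ∈ sievingPrimes a w, ¬ p ∣ n ^ 2 + 1} := by
  intro n hn
  obtain ⟨hnD, hk, a, b, hab, hcop, hsmooth, hrough, hYa, haD⟩ := mem_filter.1 hn
  obtain ⟨hDn, hnN⟩ := mem_Ioc.1 hnD
  have hab0 : a * b ≠ 0 := by omega
  have ha0 : a ≠ 0 := left_ne_zero_of_mul hab0
  have hb0 : b ≠ 0 := right_ne_zero_of_mul hab0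
  have hcard : #a.primeFactors + #b.primeFactors = k := by
    rw [← hk, ← hab, hcop.primeFactors_mul, card_union_of_disjoint hcop.disjoint_primeFactors]
  have hb1 : b ≠ 1 := by
    rintro rfl
    nlinarith
  have hbpos : 0 < #b.primeFactors := by
    rw [card_pos, Nat.nonempty_primeFactors]
    omega
  have hbJ : #b.primeFactors ≤ J := by
    refine card_primeFactors_le_of_lt_pow hw hb0 hrough ?_
    have hb : b ≤ n ^ 2 + 1 := hab ▸ Nat.le_mul_of_pos_left b (Nat.pos_of_ne_zero ha0)
    nlinarith
  refine mem_biUnion.2 ⟨a, mem_filter.2 ⟨mem_Icc.2 ⟨by omega, haD⟩, hYa, hsmooth, by omega,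
    by omega⟩, mem_filter.2 ⟨mem_Icc.2 ⟨by omega, hnN⟩, ⟨b, hab.symm⟩, fun p hp hpn ↦ ?_⟩⟩
  obtain ⟨⟨hpw, hp⟩, -, hpa⟩ := mem_sievingPrimes.1 hp
  have hpb : p ∣ b := ((Nat.Prime.dvd_mul hp).1 (hab ▸ hpn)).resolve_left hpa
  exact hpw.not_gt (hrough p (Nat.mem_primeFactors.2 ⟨hp, hpb, hb0⟩))

theorem card_splitSet_le_sum (hw : 2 ≤ w) (hJ : 2 * N ^ 2 < w ^ (J + 1)) :
    (#(splitSet N k z w D Y) : ℝ) ≤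
      12 * N / log w * ∑ a ∈ smoothFactors k z D J Y, sieveDensity a + w ^ 6 * D ^ 2 := by
  have hmem {a} (ha : a ∈ smoothFactors k z D J Y) : 0 < a ∧ a ≤ D := mem_Icc.1 (mem_filter.1 ha).1
  have hcard : #(smoothFactors k z D J Y) ≤ D :=
    (card_filter_le _ _).trans (by rw [Nat.card_Icc, Nat.add_sub_cancel])
  calc (#(splitSet N k z w D Y) : ℝ)
      ≤ ∑ a ∈ smoothFactors k z D J Y,
          (#{n ∈ Icc 1 N | a ∣ n ^ 2 + 1 ∧ ∀ p ∈ sievingPrimes a w, ¬ p ∣ n ^ 2 + 1} : ℝ) := by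
        exact_mod_cast (card_le_card (splitSet_subset_biUnion hw hJ)).trans card_biUnion_le
    _ ≤ ∑ a ∈ smoothFactors k z D J Y, (12 * N / log w * sieveDensity a + D * w ^ 6) := by
        refine sum_le_sum fun a ha ↦ (card_sifted_sq_add_one_le (hmem ha).1 hw N).trans ?_
        gcongr
        exact (rho_le_self (hmem ha).1).trans (hmem ha).2
    _ = 12 * N / log w * ∑ a ∈ smoothFactors k z D J Y, sieveDensity a +
          #(smoothFactors k z D J Y) * (D * w ^ 6) := by
        rw [sum_add_distrib, ← mul_sum, sum_const, nsmul_eq_mul]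
    _ ≤ 12 * N / log w * ∑ a ∈ smoothFactors k z D J Y, sieveDensity a + D * (D * w ^ 6) := by
        gcongr
    _ = _ := by ring

theorem sum_sieveDensity_le_rpow_neg_mul {A : Finset ℕ} {β : ℝ} (hY : 0 < Y) (hβ : 0 ≤ β)
    (hA : ∀ a ∈ A, Y ≤ a) :
    ∑ a ∈ A, sieveDensity a ≤ Y ^ (-β) * ∑ a ∈ A, rpowSieveDensity β a := by
  rw [mul_sum]
  refine sum_le_sum fun a ha ↦ ?_
  have hone : 1 ≤ Y ^ (-β) * (a : ℝ) ^ β := by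
    rw [rpow_neg hY.le, ← div_eq_inv_mul, one_le_div (by positivity)]
    exact rpow_le_rpow hY.le (hA a ha) hβ
  calc sieveDensity a ≤ sieveDensity a * (Y ^ (-β) * (a : ℝ) ^ β) :=
        le_mul_of_one_le_right (sieveDensity_nonneg a) hone
    _ = Y ^ (-β) * rpowSieveDensity β a := by
        rw [rpowSieveDensity_apply]
        ring

open scoped Nat in
theorem sum_rpowSieveDensity_smoothFactors_le {R U β : ℝ} (hR : 1 ≤ R) (hkU : k ≤ R * U)
    (hU : IsSmoothSumBound z β U) :
    ∑ a ∈ smoothFactors k z D J Y, rpowSieveDensity β a ≤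
      (2 * R) ^ J * (U ^ (k - 1) / (k - 1)!) := by
  have hU0 := hU.nonneg
  have hmaps : ∀ a ∈ smoothFactors k z D J Y, #a.primeFactors ∈ Ico (k - J) k := fun a ha ↦ by
    obtain ⟨-, -, -, hlt, hle⟩ := mem_filter.1 ha
    exact mem_Ico.2 ⟨by omega, hlt⟩
  have hfiber : ∀ j ∈ Ico (k - J) k,
      ∑ a ∈ smoothFactors k z D J Y with #a.primeFactors = j, rpowSieveDensity β a ≤
        R ^ J * (U ^ (k - 1) / (k - 1)!) := fun j hj ↦ by
    obtain ⟨hjJ, hjk⟩ := mem_Ico.1 hj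
    calc _ ≤ U ^ j / j ! := hU j _ fun a ha ↦ by
          obtain ⟨ha, hcard⟩ := mem_filter.1 ha
          obtain ⟨ha, -, hsmooth, -, -⟩ := mem_filter.1 ha
          exact ⟨(Nat.pos_iff_ne_zero.1 (mem_Icc.1 ha).1), fun p hp ↦
            Nat.mem_primesLE.2 ⟨hsmooth p hp, Nat.prime_of_mem_primeFactors hp⟩, hcard⟩
      _ ≤ R ^ (k - 1 - j) * (U ^ (k - 1) / (k - 1)!) := by
          have h := pow_div_factorial_le (zero_le_one.trans hR) hU0 hkU j (k - 1 - j) (by omega)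
          rwa [Nat.add_sub_cancel' (by omega)] at h
      _ ≤ R ^ J * (U ^ (k - 1) / (k - 1)!) := by
          gcongr
          omega
  calc _ ≤ ∑ _j ∈ Ico (k - J) k, R ^ J * (U ^ (k - 1) / (k - 1)!) := by
        rw [← sum_fiberwise_of_maps_to hmaps]
        exact sum_le_sum hfiber
    _ = ((k - (k - J) : ℕ) : ℝ) * (R ^ J * (U ^ (k - 1) / (k - 1)!)) := by
        rw [sum_const, Nat.card_Ico, nsmul_eq_mul]
    _ ≤ 2 ^ J * (R ^ J * (U ^ (k - 1) / (k - 1)!)) := by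
        gcongr
        have hJ : k - (k - J) ≤ J := by omega
        exact_mod_cast hJ.trans Nat.lt_two_pow_self.le
    _ = _ := by rw [mul_pow, mul_assoc]

open scoped Nat in
theorem card_splitSet_le {R U β : ℝ} (hw : 2 ≤ w) (hJ : 2 * N ^ 2 < w ^ (J + 1)) (hR : 1 ≤ R)
    (hkU : k ≤ R * U) (hY : 0 < Y) (hβ : 0 ≤ β) (hU : IsSmoothSumBound z β U) :
    (#(splitSet N k z w D Y) : ℝ) ≤
      12 * N / log w * (Y ^ (-β) * ((2 * R) ^ J * (U ^ (k - 1) / (k - 1)!))) + w ^ 6 * D ^ 2 := by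
  refine (card_splitSet_le_sum hw hJ).trans ?_
  gcongr
  calc _ ≤ Y ^ (-β) * ∑ a ∈ smoothFactors k z D J Y, rpowSieveDensity β a :=
        sum_sieveDensity_le_rpow_neg_mul hY hβ fun a ha ↦ (mem_filter.1 ha).2.1
    _ ≤ _ := by
        gcongr
        exact sum_rpowSieveDensity_smoothFactors_le hR hkU hU

end SplitSet

/-- Some prime `p ≤ Z` has a power that divides `m` and exceeds `V`. -/
def HasLargePrimePowDivisor (Z : ℕ) (V : ℝ) (m : ℕ) : Prop :=
  ∃ p v : ℕ, p.Prime ∧ p ≤ Z ∧ p ^ v ∣ m ∧ V < (p : ℝ) ^ v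

noncomputable instance (Z : ℕ) (V : ℝ) : DecidablePred (HasLargePrimePowDivisor Z V) :=
  Classical.decPred _

theorem exists_pow_card_dvd_sq_add_one_le {p : ℕ} (hp : p.Prime) {V : ℝ} (hV : 0 < V) (N : ℕ) :
    ∃ v₀, (∀ v, V < (p : ℝ) ^ v → v₀ ≤ v) ∧
      (#{n ∈ Icc 1 N | p ^ v₀ ∣ n ^ 2 + 1} : ℝ) ≤ 2 * N / V + 2 := by
  classical
  have hex : ∃ v, V < (p : ℝ) ^ v := pow_unbounded_of_one_lt V (Nat.one_lt_cast.2 hp.one_lt)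
  set v₀ := Nat.find hex
  refine ⟨v₀, fun _ ↦ Nat.find_min' hex, ?_⟩
  have hrho : (rho (p ^ v₀) : ℝ) ≤ 2 := mod_cast rho_prime_pow_le hp v₀
  have hlarge : V ≤ ((p ^ v₀ : ℕ) : ℝ) := by
    rw [Nat.cast_pow]
    exact (Nat.find_spec hex).le
  have hcount := (abs_le.1 (abs_card_dvd_sq_add_one_sub_le (pow_pos hp.pos v₀) N)).2
  have hmain : N * (rho (p ^ v₀) / ((p ^ v₀ : ℕ) : ℝ)) ≤ N * (2 / V) := by gcongr
  calc _ ≤ N * (2 / V) + 2 := by linarith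
    _ = _ := by ring

theorem card_hasLargePrimePowDivisor_le {V : ℝ} (hV : 0 < V) (N Z : ℕ) :
    (#{n ∈ Icc 1 N | HasLargePrimePowDivisor Z V (n ^ 2 + 1)} : ℝ) ≤ Z * (2 * N / V + 2) := by
  choose! v₀ hmin hcount using fun (p : ℕ) (hp : p.Prime) ↦
    exists_pow_card_dvd_sq_add_one_le hp hV N
  have hsubset : ({n ∈ Icc 1 N | HasLargePrimePowDivisor Z V (n ^ 2 + 1)} : Finset ℕ) ⊆
      (Nat.primesLE Z).biUnion fun p ↦ {n ∈ Icc 1 N | p ^ v₀ p ∣ n ^ 2 + 1} := fun n hn ↦ by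
    obtain ⟨hn, p, v, hp, hpZ, hdvd, hlt⟩ := mem_filter.1 hn
    exact mem_biUnion.2 ⟨p, Nat.mem_primesLE.2 ⟨hpZ, hp⟩,
      mem_filter.2 ⟨hn, (pow_dvd_pow p (hmin p hp v hlt)).trans hdvd⟩⟩
  have hcard : #(Nat.primesLE Z) ≤ Z := by
    simpa using card_le_card fun p hp ↦ mem_Icc.2
      ⟨(Nat.prime_of_mem_primesLE hp).pos, Nat.le_of_mem_primesLE hp⟩
  calc _ ≤ ∑ p ∈ Nat.primesLE Z, (#{n ∈ Icc 1 N | p ^ v₀ p ∣ n ^ 2 + 1} : ℝ) := by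
        exact_mod_cast (card_le_card hsubset).trans card_biUnion_le
    _ ≤ #(Nat.primesLE Z) * (2 * N / V + 2) := by
        rw [← nsmul_eq_mul, ← sum_const]
        exact sum_le_sum fun p hp ↦ hcount p (Nat.mem_primesLE.1 hp).2
    _ ≤ Z * (2 * N / V + 2) := by gcongr

/-- The divisor of `m` made up of the full powers of the primes satisfying `P`. -/
def primaryPart (P : ℕ → Prop) [DecidablePred P] (m : ℕ) : ℕ :=
  ∏ p ∈ m.primeFactors with P p, p ^ m.factorization p

section PrimaryPart

variable {P : ℕ → Prop} [DecidablePred P] {m : ℕ}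

theorem primaryPart_mul_primaryPart_not (hm : m ≠ 0) :
    primaryPart P m * primaryPart (fun p ↦ ¬ P p) m = m := by
  rw [primaryPart, primaryPart, prod_filter_mul_prod_filter_not]
  exact Nat.prod_factorization_pow_eq_self hm

theorem of_mem_primeFactors_primaryPart {p : ℕ} (h : p ∈ (primaryPart P m).primeFactors) : P p := by
  have hp := Nat.prime_of_mem_primeFactors h
  obtain ⟨q, hq, hpq⟩ := hp.prime.exists_mem_finset_dvd (Nat.dvd_of_mem_primeFactors h)
  obtain ⟨hq, hPq⟩ := mem_filter.1 hq
  rwa [(Nat.prime_dvd_prime_iff_eq hp (Nat.prime_of_mem_primeFactors hq)).1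
    (hp.dvd_of_dvd_pow hpq)]

theorem primaryPart_ne_zero : primaryPart P m ≠ 0 :=
  prod_ne_zero_iff.2 fun _ hp ↦
    pow_ne_zero _ (Nat.prime_of_mem_primeFactors (mem_filter.1 hp).1).ne_zero

theorem coprime_primaryPart_primaryPart_not :
    (primaryPart P m).Coprime (primaryPart (fun p ↦ ¬ P p) m) :=
  (Nat.disjoint_primeFactors primaryPart_ne_zero primaryPart_ne_zero).1 <|
    disjoint_left.2 fun _ h h' ↦
      of_mem_primeFactors_primaryPart h' (of_mem_primeFactors_primaryPart h)

end PrimaryPart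

/-- The largest divisor of `m ≠ 0` all of whose prime factors are `< y` (strictly, as in
`Nat.smoothNumbers`). -/
def smoothPart (y m : ℕ) : ℕ := primaryPart (· < y) m

section SmoothPart

variable {m y : ℕ}

theorem smoothPart_zero (m : ℕ) : smoothPart 0 m = 1 := by
  simp [smoothPart, primaryPart]

theorem smoothPart_succ_of_mem (h : y ∈ m.primeFactors) :
    smoothPart (y + 1) m = y ^ m.factorization y * smoothPart y m := by
  have hinsert : {p ∈ m.primeFactors | p < y + 1} = insert y {p ∈ m.primeFactors | p < y} := by
    ext p
    simp only [mem_filter, mem_insert]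
    grind
  rw [smoothPart, primaryPart, hinsert, prod_insert (by simp), smoothPart, primaryPart]

theorem smoothPart_succ_of_notMem (h : y ∉ m.primeFactors) :
    smoothPart (y + 1) m = smoothPart y m := by
  have hfilter : {p ∈ m.primeFactors | p < y + 1} = {p ∈ m.primeFactors | p < y} :=
    filter_congr fun p hp ↦ by
      have hne : p ≠ y := ne_of_mem_of_not_mem hp h
      omega
  rw [smoothPart, primaryPart, hfilter, smoothPart, primaryPart]

theorem exists_prime_lt_smoothPart {D : ℕ} (hD : 1 ≤ D) (h : D < smoothPart y m) :
    ∃ p ∈ m.primeFactors, p < y ∧ smoothPart p m ≤ D ∧ D < smoothPart (p + 1) m := by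
  induction y with
  | zero =>
    rw [smoothPart_zero] at h
    omega
  | succ y ih =>
    rcases lt_or_ge D (smoothPart y m) with hy | hy
    · obtain ⟨p, hp, hpy, hle, hlt⟩ := ih hy
      exact ⟨p, hp, by omega, hle, hlt⟩
    · refine ⟨y, by_contra fun hmem ↦ ?_, y.lt_succ_self, hy, h⟩
      rw [smoothPart_succ_of_notMem hmem] at h
      omega

theorem smoothPart_succ_le_pow {V : ℝ} (hV : 1 ≤ V)
    (h : ∀ p ∈ m.primeFactors, p ≤ y → (p : ℝ) ^ m.factorization p ≤ V) :
    (smoothPart (y + 1) m : ℝ) ≤ V ^ y := by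
  have hcard : #{p ∈ m.primeFactors | p < y + 1} ≤ y := by
    simpa using card_le_card fun p hp ↦ mem_Icc.2
      ⟨(Nat.prime_of_mem_primeFactors (mem_filter.1 hp).1).pos,
        Nat.lt_succ_iff.1 (mem_filter.1 hp).2⟩
  rw [smoothPart, primaryPart, Nat.cast_prod]
  calc ∏ p ∈ m.primeFactors with p < y + 1, ((p ^ m.factorization p : ℕ) : ℝ)
      ≤ ∏ p ∈ m.primeFactors with p < y + 1, V := by
        refine prod_le_prod (fun _ _ ↦ Nat.cast_nonneg _) fun p hp ↦ ?_
        obtain ⟨hp, hlt⟩ := mem_filter.1 hp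
        exact_mod_cast h p hp (Nat.lt_succ_iff.1 hlt)
    _ = V ^ #{p ∈ m.primeFactors | p < y + 1} := prod_const _
    _ ≤ V ^ y := pow_le_pow_right₀ hV hcard

end SmoothPart

theorem hasSmoothRoughSplit_of_smoothPart {D m w y z : ℕ} {Y : ℝ} (hm : m ≠ 0) (hz : y ≤ z + 1)
    (hw : w < y) (hY : Y ≤ smoothPart y m) (hD : smoothPart y m ≤ D) :
    HasSmoothRoughSplit z w D Y m := by
  refine ⟨smoothPart y m, primaryPart (fun p ↦ ¬ p < y) m,
    primaryPart_mul_primaryPart_not (P := (· < y)) hm,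
    coprime_primaryPart_primaryPart_not (P := (· < y)), fun p hp ↦ ?_, fun p hp ↦ ?_, hY, hD⟩
  · have hlt := of_mem_primeFactors_primaryPart (P := (· < y)) hp
    omega
  · have hge := of_mem_primeFactors_primaryPart (P := fun p ↦ ¬ p < y) hp
    omega

theorem ordProj_le_of_not_hasLargePrimePowDivisor {m p Z : ℕ} {V : ℝ}
    (h : ¬ HasLargePrimePowDivisor Z V m) (hp : p.Prime) (hpZ : p ≤ Z) :
    (p : ℝ) ^ m.factorization p ≤ V :=
  not_lt.1 fun hlt ↦ h ⟨p, m.factorization p, hp, hpZ, Nat.ordProj_dvd m p, hlt⟩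

theorem split_or_hasLargePrimePowDivisor {m y K : ℕ} {E V W Y : ℝ} (hm : m ≠ 0) (hV : 1 ≤ V)
    (hVK : V ^ K ≤ E) (hW : 0 < W) (hWY : W * Y ≤ E) :
    HasSmoothRoughSplit y y ⌊E⌋₊ 1 m ∨ HasLargePrimePowDivisor y W m ∨
      HasLargePrimePowDivisor K V m ∨
        ∃ p, K < p ∧ p ≤ y ∧ Y ≤ smoothPart p m ∧ smoothPart p m ≤ ⌊E⌋₊ := by
  by_contra! ⟨hsplit, hlargeW, hlargeV, hnone⟩
  have hE : 1 ≤ ⌊E⌋₊ := Nat.le_floor (by simpa using (one_le_pow₀ hV).trans hVK)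
  have hbig : ⌊E⌋₊ < smoothPart (y + 1) m := not_le.1 fun hle ↦
    hsplit <| hasSmoothRoughSplit_of_smoothPart hm le_rfl y.lt_succ_self
      (mod_cast Nat.one_le_iff_ne_zero.2 primaryPart_ne_zero) hle
  obtain ⟨p, hp, hpy, hle, hlt⟩ := exists_prime_lt_smoothPart hE hbig
  have hprime := Nat.prime_of_mem_primeFactors hp
  have hE_lt : E < smoothPart (p + 1) m := Nat.lt_of_floor_lt hlt
  have hKp : K < p := not_le.1 fun hpK ↦ hE_lt.not_ge <|
    calc (smoothPart (p + 1) m : ℝ) ≤ V ^ p := smoothPart_succ_le_pow hV fun q hq hqp ↦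
          ordProj_le_of_not_hasLargePrimePowDivisor hlargeV (Nat.prime_of_mem_primeFactors hq)
            (hqp.trans hpK)
      _ ≤ V ^ K := pow_le_pow_right₀ hV hpK
      _ ≤ E := hVK
  have hY : Y ≤ smoothPart p m := by
    refine le_of_mul_le_mul_left ?_ hW
    rw [smoothPart_succ_of_mem hp, Nat.cast_mul, Nat.cast_pow] at hE_lt
    calc W * Y ≤ p ^ m.factorization p * smoothPart p m := hWY.trans hE_lt.le
      _ ≤ W * smoothPart p m := by
        gcongr
        exact ordProj_le_of_not_hasLargePrimePowDivisor hlargeW hprime (Nat.lt_succ_iff.1 hpy)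
  exact (hnone p hKp (Nat.lt_succ_iff.1 hpy) hY).not_ge hle

theorem exists_dyadic_interval {X l : ℝ} (hl : 0 < l) (hlX : l ≤ X) :
    ∃ i : ℕ, X / 2 ^ (i + 1) < l ∧ l ≤ X / 2 ^ i := by
  obtain ⟨i, hle, hlt⟩ := exists_nat_pow_near ((one_le_div hl).2 hlX) one_lt_two
  exact ⟨i, by rwa [div_lt_comm₀ (by positivity) hl], by rwa [le_div_comm₀ hl (by positivity)]⟩

theorem split_or_hasLargePrimePowDivisor_exp {X κ : ℝ} {m : ℕ} (hX : 0 ≤ X) (hκ : 0 < κ)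
    (hm : m ≠ 0) :
    HasSmoothRoughSplit ⌊exp X⌋₊ ⌊exp X⌋₊ ⌊exp (8 * X)⌋₊ 1 m ∨
      HasLargePrimePowDivisor ⌊exp X⌋₊ (exp (4 * X)) m ∨
      HasLargePrimePowDivisor ⌊exp κ⌋₊ (exp (8 * X / ⌊exp κ⌋₊)) m ∨
      ∃ i : ℕ, κ < X / 2 ^ i ∧ HasSmoothRoughSplit ⌊exp (X / 2 ^ i)⌋₊ ⌊exp (X / 2 ^ (i + 1))⌋₊
        ⌊exp (8 * X)⌋₊ (exp (4 * X)) m := by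
  have hK : 0 < ⌊exp κ⌋₊ := Nat.floor_pos.2 (one_le_exp hκ.le)
  have hVK : exp (8 * X / ⌊exp κ⌋₊) ^ ⌊exp κ⌋₊ ≤ exp (8 * X) := by
    rw [← exp_nat_mul, mul_div_cancel₀ _ (by positivity)]
  have hWY : exp (4 * X) * exp (4 * X) ≤ exp (8 * X) := by
    rw [← exp_add]
    exact exp_le_exp.2 (by linarith)
  refine (split_or_hasLargePrimePowDivisor hm (one_le_exp (by positivity)) hVK (exp_pos _)
    hWY).imp_right (Or.imp_right (Or.imp_right fun ⟨p, hKp, hpX, hY, hD⟩ ↦ ?_))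
  have hp0 : (0 : ℝ) < p := Nat.cast_pos.2 (pos_of_gt hKp)
  have hκp : κ < log p := (lt_log_iff_exp_lt hp0).2 (Nat.lt_of_floor_lt hKp)
  have hpX' : log p ≤ X := (log_le_iff_le_exp hp0).2 ((Nat.le_floor_iff (exp_pos X).le).1 hpX)
  obtain ⟨i, hlt, hle⟩ := exists_dyadic_interval (hκ.trans hκp) hpX'
  exact ⟨i, hκp.trans_le hle, hasSmoothRoughSplit_of_smoothPart hm
    ((Nat.le_floor ((log_le_iff_le_exp hp0).1 hle)).trans (Nat.le_succ _))
    ((Nat.floor_lt (exp_pos _).le).2 ((lt_log_iff_exp_lt hp0).1 hlt)) hY hD⟩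

/-! ### Exponential scales -/

theorem two_le_floor_exp {u : ℝ} (hu : 1 ≤ u) : 2 ≤ ⌊exp u⌋₊ :=
  Nat.le_floor <| by linarith [add_one_le_exp u, Nat.cast_ofNat (R := ℝ) (n := 2)]

theorem floor_exp_le (u : ℝ) : (⌊exp u⌋₊ : ℝ) ≤ exp u := Nat.floor_le (exp_pos u).le

theorem log_floor_exp_le {u : ℝ} (hu : 1 ≤ u) : log ⌊exp u⌋₊ ≤ u :=
  (log_le_iff_le_exp (Nat.cast_pos.2 (two_pos.trans_le (two_le_floor_exp hu)))).2 (floor_exp_le u)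

theorem half_le_log_floor_exp {u : ℝ} (hu : 2 ≤ u) : u / 2 ≤ log ⌊exp u⌋₊ := by
  have hfloor : 2 ≤ ⌊exp u⌋₊ := two_le_floor_exp (by linarith)
  rw [le_log_iff_exp_le (Nat.cast_pos.2 (two_pos.trans_le hfloor))]
  have hlt : exp u < ⌊exp u⌋₊ + 1 := Nat.lt_floor_add_one _
  have hsq : exp u = exp (u / 2) * exp (u / 2) := by rw [← exp_add, add_halves]
  nlinarith [add_one_le_exp (u / 2)]

/-- `log u + C` is a smooth-sum bound for the primes `≤ exp u`, uniformly in the scale `u` and in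
the exponents `β ≤ min (1 / 4) (M / u)`. -/
def IsSmoothSumConstant (M C : ℝ) : Prop :=
  ∀ u β : ℝ, 2 ≤ u → 0 ≤ β → β ≤ 1 / 4 → β * u ≤ M → IsSmoothSumBound ⌊exp u⌋₊ β (log u + C)

theorem exists_isSmoothSumConstant (M : ℝ) : ∃ C, 0 ≤ C ∧ IsSmoothSumConstant M C := by
  obtain ⟨C, hC, h⟩ := exists_isSmoothSumBound M
  refine ⟨C, hC, fun u β hu hβ hβ4 hβu ↦ ?_⟩
  have hlog : log ⌊exp u⌋₊ ≤ u := log_floor_exp_le (by linarith)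
  have hlog0 : 0 < log ⌊exp u⌋₊ := by linarith [half_le_log_floor_exp hu]
  refine (h _ β (two_le_floor_exp (by linarith)) hβ hβ4
    ((mul_le_mul_of_nonneg_left hlog hβ).trans hβu)).mono ?_
  gcongr

/-- The bound `x * U ^ (k - 1) / ((k - 1)! * log x)` at `x = exp (32 * X)`. -/
noncomputable def omegaBound (X U : ℝ) (k : ℕ) : ℝ :=
  exp (32 * X) / (32 * X) * (U ^ (k - 1) / (k - 1).factorial)

theorem omegaBound_nonneg {X U : ℝ} (hX : 0 ≤ X) (hU : 0 ≤ U) (k : ℕ) : 0 ≤ omegaBound X U k := by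
  unfold omegaBound
  positivity

section ExpScale

variable {N k J z : ℕ} {R U X v β Y : ℝ}

theorem two_mul_sq_lt_floor_exp_pow (hv : 2 ≤ v) (hvX : v ≤ X) (hN : N ≤ exp (32 * X))
    (hJ : 192 * X < (J + 1) * v) : 2 * N ^ 2 < ⌊exp v⌋₊ ^ (J + 1) := by
  have hfloor : (0 : ℝ) < ⌊exp v⌋₊ :=
    Nat.cast_pos.2 (two_pos.trans_le (two_le_floor_exp (by linarith)))
  have hlog := half_le_log_floor_exp hv
  have hreal : (2 * N ^ 2 : ℝ) < (⌊exp v⌋₊ : ℝ) ^ (J + 1) := by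
    calc (2 * N ^ 2 : ℝ) ≤ exp (32 * X) * exp (32 * X) ^ 2 := by
          gcongr
          linarith [add_one_le_exp (32 * X)]
      _ = exp (96 * X) := by
          rw [← exp_nat_mul, ← exp_add]
          ring_nf
      _ < _ := by
          rw [← lt_log_iff_exp_lt (by positivity), log_pow, Nat.cast_succ]
          nlinarith
  exact_mod_cast hreal

theorem floor_exp_pow_mul_floor_exp_pow_le (hvX : v ≤ X) :
    (⌊exp v⌋₊ : ℝ) ^ 6 * (⌊exp (8 * X)⌋₊ : ℝ) ^ 2 ≤ exp (22 * X) := by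
  calc (⌊exp v⌋₊ : ℝ) ^ 6 * (⌊exp (8 * X)⌋₊ : ℝ) ^ 2 ≤ exp X ^ 6 * exp (8 * X) ^ 2 := by
        gcongr
        · exact (floor_exp_le v).trans (exp_le_exp.2 hvX)
        · exact floor_exp_le _
    _ = exp (22 * X) := by
        rw [← exp_nat_mul, ← exp_nat_mul, ← exp_add]
        ring_nf

theorem card_splitSet_floor_exp_le (hR : 1 ≤ R) (hkU : k ≤ R * U) (hv : 2 ≤ v) (hvX : v ≤ X)
    (hN : N ≤ exp (32 * X)) (hJ : 192 * X < (J + 1) * v) (hY : 0 < Y) (hβ : 0 ≤ β)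
    (hU : IsSmoothSumBound z β U) :
    (#(splitSet N k z ⌊exp v⌋₊ ⌊exp (8 * X)⌋₊ Y) : ℝ) ≤
      768 * (X / v) * (Y ^ (-β) * (2 * R) ^ J) * omegaBound X U k + exp (22 * X) := by
  have hU0 := hU.nonneg
  have hX : 0 < X := by linarith
  refine (card_splitSet_le (two_le_floor_exp (by linarith))
    (two_mul_sq_lt_floor_exp_pow hv hvX hN hJ) hR hkU hY hβ hU).trans ?_
  gcongr ?_ + ?_
  · calc _ ≤ 12 * exp (32 * X) / (v / 2) *
          (Y ^ (-β) * ((2 * R) ^ J * (U ^ (k - 1) / (k - 1).factorial))) := by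
          gcongr
          exact half_le_log_floor_exp hv
      _ = _ := by
          rw [omegaBound]
          field_simp
          ring
  · exact floor_exp_pow_mul_floor_exp_pow_le hvX

theorem card_splitSet_one_le (hR : 1 ≤ R) (hkU : k ≤ R * U) (hX : 2 ≤ X)
    (hN : N ≤ exp (32 * X)) (hU : IsSmoothSumBound ⌊exp X⌋₊ 0 U) :
    (#(splitSet N k ⌊exp X⌋₊ ⌊exp X⌋₊ ⌊exp (8 * X)⌋₊ 1) : ℝ) ≤
      768 * (2 * R) ^ 192 * omegaBound X U k + exp (22 * X) := by
  have h := card_splitSet_floor_exp_le (J := 192) hR hkU hX le_rfl hN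
    (by norm_num; linarith) one_pos le_rfl hU
  rwa [one_rpow, one_mul, div_self (by linarith), mul_one] at h

theorem two_pow_mul_exp_neg_two_pow_le (i : ℕ) :
    (2 : ℝ) ^ i * exp (-2 ^ i) ≤ 2 * (1 / 2) ^ i := by
  have hpos : (0 : ℝ) < 2 ^ i := by positivity
  have hexp := quadratic_le_exp_of_nonneg hpos.le
  rw [exp_neg, one_div, inv_pow, ← div_eq_mul_inv, ← div_eq_mul_inv,
    div_le_div_iff₀ (exp_pos _) hpos]
  nlinarith

theorem exp_rpow_neg_mul_two_mul_pow (hR : 0 < R) (hX : X ≠ 0) (i : ℕ) :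
    exp (4 * X) ^ (-((96 * log (2 * R) + 1 / 4) * 2 ^ i / X)) * (2 * R) ^ (384 * 2 ^ i) =
      exp (-2 ^ i) := by
  nth_rw 2 [← exp_log (mul_pos two_pos hR)]
  rw [← exp_nat_mul, ← exp_mul, ← exp_add]
  congr 1
  push_cast
  field_simp
  ring

theorem card_splitSet_dyadic_le {C : ℝ} (hR : 1 ≤ R)
    (hC : IsSmoothSumConstant (96 * log (2 * R) + 1 / 4) C) (hU : log X + C ≤ U)
    (hkU : k ≤ R * U) (hX : 0 < X) (hN : N ≤ exp (32 * X)) {i : ℕ}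
    (hi : 384 * log (2 * R) + 4 < X / 2 ^ i) :
    (#(splitSet N k ⌊exp (X / 2 ^ i)⌋₊ ⌊exp (X / 2 ^ (i + 1))⌋₊ ⌊exp (8 * X)⌋₊
      (exp (4 * X))) : ℝ) ≤ 3072 * (1 / 2) ^ i * omegaBound X U k + exp (22 * X) := by
  have hl : 0 ≤ log (2 * R) := log_nonneg (by linarith)
  have hpow : (1 : ℝ) ≤ 2 ^ i := one_le_pow₀ one_le_two
  have hhalf : X / 2 ^ (i + 1) = X / 2 ^ i / 2 := by rw [pow_succ, div_div]
  have hle : X / 2 ^ i ≤ X := div_le_self hX.le hpow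
  set β := (96 * log (2 * R) + 1 / 4) * 2 ^ i / X with hβ
  have hβmul : β * (X / 2 ^ i) = 96 * log (2 * R) + 1 / 4 := by
    rw [hβ]
    field_simp
  have hβ0 : 0 ≤ β := by positivity
  have hβ4 : β ≤ 1 / 4 := by nlinarith
  have hsum : IsSmoothSumBound ⌊exp (X / 2 ^ i)⌋₊ β U := by
    refine (hC _ β (by linarith) hβ0 hβ4 hβmul.le).mono (le_trans ?_ hU)
    gcongr
  have hJ : 192 * X < (((384 * 2 ^ i : ℕ) : ℝ) + 1) * (X / 2 ^ (i + 1)) := by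
    have hscale : 2 ^ i * (X / 2 ^ (i + 1)) = X / 2 := by
      rw [pow_succ]
      field_simp
    push_cast
    nlinarith
  refine (card_splitSet_floor_exp_le hR hkU (by linarith) (by linarith) hN hJ (exp_pos _) hβ0
    hsum).trans ?_
  have hQ := omegaBound_nonneg hX.le hsum.nonneg k
  have hratio : X / (X / 2 ^ (i + 1)) = 2 * 2 ^ i := by
    rw [div_div_cancel₀ hX.ne', pow_succ']
  rw [hβ, exp_rpow_neg_mul_two_mul_pow (by linarith) hX.ne', hratio]
  gcongr ?_ * _ + _
  linarith [two_pow_mul_exp_neg_two_pow_le i]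

theorem card_hasLargePrimePowDivisor_exp_le {t : ℝ} (ht : t ≤ 32 * X) (hN : N ≤ exp (32 * X))
    (Z : ℕ) :
    (#{n ∈ Icc 1 N | HasLargePrimePowDivisor Z (exp t) (n ^ 2 + 1)} : ℝ) ≤
      4 * Z * exp (32 * X - t) := by
  have hone : 1 ≤ exp (32 * X - t) := one_le_exp (by linarith)
  calc _ ≤ Z * (2 * N / exp t + 2) := card_hasLargePrimePowDivisor_le (exp_pos t) N Z
    _ ≤ Z * (2 * exp (32 * X) / exp t + 2 * exp (32 * X - t)) := by
        gcongr
        linarith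
    _ = 4 * Z * exp (32 * X - t) := by
        rw [exp_sub]
        ring

end ExpScale

theorem one_le_rpow_mul_pow_div_factorial {R U x : ℝ} {k : ℕ} (hR : 1 ≤ R) (hx : 1 ≤ x)
    (hk0 : k ≠ 0) (hk : k ≤ R * log x) (hU : log x ≤ U) :
    1 ≤ x ^ (R * log R) * (U ^ (k - 1) / (k - 1).factorial) := by
  have hU0 : 0 ≤ U := (log_nonneg hx).trans hU
  have hkU : k ≤ R * U := hk.trans (by gcongr)
  have hratio := pow_div_factorial_le (by linarith) hU0 hkU 0 (k - 1) (by omega)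
  rw [pow_zero, Nat.factorial_zero, Nat.cast_one, div_one, zero_add] at hratio
  refine hratio.trans ?_
  gcongr
  calc R ^ (k - 1) ≤ R ^ k := pow_le_pow_right₀ hR (Nat.sub_le k 1)
    _ = exp (log R * k) := by rw [← rpow_natCast, rpow_def_of_pos (by linarith)]
    _ ≤ exp (log x * (R * log R)) := by
        have hlogR := log_nonneg hR
        refine exp_le_exp.2 ?_
        calc log R * k ≤ log R * (R * log x) := by gcongr
          _ = log x * (R * log R) := by ring
    _ = x ^ (R * log R) := (rpow_def_of_pos (by linarith) _).symm

theorem eventually_const_mul_exp_le_omegaBound {R δ : ℝ} (hR : 1 ≤ R) (hδ : 0 < δ) {a : ℝ}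
    (ha : 0 ≤ a) :
    ∀ᶠ X in Filter.atTop, ∀ (k : ℕ) (U : ℝ), k ≠ 0 → k ≤ R * log (32 * X) → log (32 * X) ≤ U →
      a * exp (32 * X - δ * X) ≤ omegaBound X U k := by
  have hgrowth := ((isLittleO_rpow_exp_pos_mul_atTop (R * log R + 1)
    (div_pos hδ (by norm_num : (0 : ℝ) < 32))).const_mul_left a).bound one_pos
  have hscale : Filter.Tendsto (fun X : ℝ ↦ 32 * X) Filter.atTop Filter.atTop :=
    Filter.tendsto_id.const_mul_atTop (by norm_num)
  filter_upwards [hscale.eventually hgrowth, Filter.eventually_ge_atTop 1]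
    with X hX hX1 k U hk0 hk hU
  have hX0 : 0 < 32 * X := by linarith
  have hU0 : 0 ≤ U := (log_nonneg (by linarith)).trans hU
  rw [one_mul, norm_of_nonneg (by positivity), norm_of_nonneg (by positivity),
    rpow_add_one hX0.ne', show δ / 32 * (32 * X) = δ * X by ring] at hX
  set Λ := U ^ (k - 1) / ((k - 1).factorial : ℝ)
  have hone : 1 ≤ (32 * X) ^ (R * log R) * Λ :=
    one_le_rpow_mul_pow_div_factorial hR (by linarith) hk0 hk hU
  have hmain : a * (32 * X) ≤ Λ * exp (δ * X) := by
    calc a * (32 * X) ≤ a * (32 * X) * ((32 * X) ^ (R * log R) * Λ) :=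
          le_mul_of_one_le_right (by positivity) hone
      _ = Λ * (a * ((32 * X) ^ (R * log R) * (32 * X))) := by ring
      _ ≤ Λ * exp (δ * X) := by gcongr
  rw [omegaBound, exp_sub, ← mul_div_assoc, div_mul_eq_mul_div,
    div_le_div_iff₀ (exp_pos _) hX0]
  calc a * exp (32 * X) * (32 * X) = exp (32 * X) * (a * (32 * X)) := by ring
    _ ≤ exp (32 * X) * (Λ * exp (δ * X)) := by gcongr
    _ = _ := by ring

/-- The `n ≤ N` with `ω (n ^ 2 + 1) = k` for which the smooth part of `n ^ 2 + 1` first exceeds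
`exp (8 * X)` at a prime of `(exp κ, exp X]`, arranged by dyadic intervals for the logarithm of
this prime. -/
noncomputable def dyadicSplitSet (N k : ℕ) (X κ : ℝ) : Finset ℕ :=
  {i ∈ range ⌈X⌉₊ | κ < X / 2 ^ i}.biUnion fun i ↦
    splitSet N k ⌊exp (X / 2 ^ i)⌋₊ ⌊exp (X / 2 ^ (i + 1))⌋₊ ⌊exp (8 * X)⌋₊ (exp (4 * X))

section Assembly

variable {N k : ℕ} {R U X κ : ℝ}

theorem card_dyadicSplitSet_le {C : ℝ} (hR : 1 ≤ R)
    (hC : IsSmoothSumConstant (96 * log (2 * R) + 1 / 4) C) (hU : log X + C ≤ U)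
    (hU0 : 0 ≤ U) (hkU : k ≤ R * U) (hX : 0 < X) (hN : N ≤ exp (32 * X)) :
    (#(dyadicSplitSet N k X (384 * log (2 * R) + 4)) : ℝ) ≤
      6144 * omegaBound X U k + exp (24 * X) := by
  have hQ := omegaBound_nonneg hX.le hU0 k
  have hceil : (⌈X⌉₊ : ℝ) ≤ exp (2 * X) := by
    linarith [Nat.ceil_lt_add_one hX.le, add_one_le_exp (2 * X)]
  calc (#(dyadicSplitSet N k X (384 * log (2 * R) + 4)) : ℝ)
      ≤ ∑ i ∈ range ⌈X⌉₊ with 384 * log (2 * R) + 4 < X / 2 ^ i,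
          (#(splitSet N k ⌊exp (X / 2 ^ i)⌋₊ ⌊exp (X / 2 ^ (i + 1))⌋₊ ⌊exp (8 * X)⌋₊
            (exp (4 * X))) : ℝ) := by
        rw [← Nat.cast_sum]
        exact Nat.cast_le.2 card_biUnion_le
    _ ≤ ∑ i ∈ range ⌈X⌉₊ with 384 * log (2 * R) + 4 < X / 2 ^ i,
          (3072 * (1 / 2) ^ i * omegaBound X U k + exp (22 * X)) :=
        sum_le_sum fun i hi ↦ card_splitSet_dyadic_le hR hC hU hkU hX hN (mem_filter.1 hi).2
    _ ≤ ∑ i ∈ range ⌈X⌉₊, (3072 * (1 / 2) ^ i * omegaBound X U k + exp (22 * X)) :=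
        sum_le_sum_of_subset_of_nonneg (filter_subset _ _) fun _ _ _ ↦ by positivity
    _ = 3072 * (∑ i ∈ range ⌈X⌉₊, (1 / 2 : ℝ) ^ i) * omegaBound X U k +
          ⌈X⌉₊ * exp (22 * X) := by
        rw [sum_add_distrib, ← sum_mul, ← mul_sum, sum_const, card_range, nsmul_eq_mul]
    _ ≤ 3072 * 2 * omegaBound X U k + exp (2 * X) * exp (22 * X) := by
        gcongr
        exact sum_geometric_two_le _
    _ = 6144 * omegaBound X U k + exp (24 * X) := by
        rw [← exp_add]
        ring_nf

theorem filter_card_primeFactors_subset (hX : 0 ≤ X) (hκ : 1 ≤ κ) :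
    ({n ∈ Icc 1 N | #(n ^ 2 + 1).primeFactors = k} : Finset ℕ) ⊆
      Icc 1 ⌊exp (8 * X)⌋₊ ∪ (splitSet N k ⌊exp X⌋₊ ⌊exp X⌋₊ ⌊exp (8 * X)⌋₊ 1 ∪
        ({n ∈ Icc 1 N | HasLargePrimePowDivisor ⌊exp X⌋₊ (exp (4 * X)) (n ^ 2 + 1)} ∪
          ({n ∈ Icc 1 N | HasLargePrimePowDivisor ⌊exp κ⌋₊ (exp (8 * X / ⌊exp κ⌋₊)) (n ^ 2 + 1)} ∪
            dyadicSplitSet N k X κ))) := by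
  intro n hn
  obtain ⟨hnN, hk⟩ := mem_filter.1 hn
  obtain ⟨hn1, hn2⟩ := mem_Icc.1 hnN
  rcases le_or_gt n ⌊exp (8 * X)⌋₊ with hnD | hDn
  · exact mem_union_left _ (mem_Icc.2 ⟨hn1, hnD⟩)
  refine mem_union_right _ (mem_union.2 ?_)
  rcases split_or_hasLargePrimePowDivisor_exp hX (by linarith) (Nat.succ_ne_zero (n ^ 2)) with
    h | h | h | ⟨i, hi, h⟩
  · exact Or.inl (mem_filter.2 ⟨mem_Ioc.2 ⟨hDn, hn2⟩, hk, h⟩)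
  · exact Or.inr (mem_union_left _ (mem_filter.2 ⟨hnN, h⟩))
  · exact Or.inr (mem_union_right _ (mem_union_left _ (mem_filter.2 ⟨hnN, h⟩)))
  · refine Or.inr (mem_union_right _ (mem_union_right _ (mem_biUnion.2
      ⟨i, mem_filter.2 ⟨mem_range.2 (Nat.lt_ceil.2 ?_), hi⟩,
        mem_filter.2 ⟨mem_Ioc.2 ⟨hDn, hn2⟩, hk, h⟩⟩)))
    have hpow : (2 : ℝ) ^ i < X := (one_lt_div (by positivity)).1 (hκ.trans_lt hi)
    exact (mod_cast Nat.lt_two_pow_self : (i : ℝ) < 2 ^ i).trans hpow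

theorem card_filter_card_primeFactors_le (hX : 0 ≤ X) (hκ : 1 ≤ κ) (hN : N ≤ exp (32 * X)) :
    (#{n ∈ Icc 1 N | #(n ^ 2 + 1).primeFactors = k} : ℝ) ≤
      #(splitSet N k ⌊exp X⌋₊ ⌊exp X⌋₊ ⌊exp (8 * X)⌋₊ 1) + #(dyadicSplitSet N k X κ) +
        (exp (8 * X) + 4 * exp (29 * X) +
          4 * ⌊exp κ⌋₊ * exp (32 * X - 8 * X / ⌊exp κ⌋₊)) := by
  have hK : (1 : ℝ) ≤ ⌊exp κ⌋₊ := Nat.one_le_cast.2 (Nat.floor_pos.2 (one_le_exp (by linarith)))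
  have hsmall : (#(Icc 1 ⌊exp (8 * X)⌋₊) : ℝ) ≤ exp (8 * X) := by
    rw [Nat.card_Icc, Nat.add_sub_cancel]
    exact floor_exp_le _
  have hlarge : (#{n ∈ Icc 1 N | HasLargePrimePowDivisor ⌊exp X⌋₊ (exp (4 * X)) (n ^ 2 + 1)} : ℝ) ≤
      4 * exp (29 * X) := by
    calc _ ≤ 4 * ⌊exp X⌋₊ * exp (32 * X - 4 * X) :=
          card_hasLargePrimePowDivisor_exp_le (by linarith) hN _
      _ ≤ 4 * exp X * exp (32 * X - 4 * X) := by
          gcongr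
          exact floor_exp_le X
      _ = 4 * exp (29 * X) := by
          rw [mul_assoc, ← exp_add]
          ring_nf
  have hlarge' := card_hasLargePrimePowDivisor_exp_le (t := 8 * X / ⌊exp κ⌋₊)
    (by linarith [div_le_self (by positivity : 0 ≤ 8 * X) hK]) hN ⌊exp κ⌋₊
  have hcover := (card_le_card (filter_card_primeFactors_subset (N := N) (k := k) hX hκ)).trans <|
    (card_union_le _ _).trans <| Nat.add_le_add_left ((card_union_le _ _).trans <|
      Nat.add_le_add_left ((card_union_le _ _).trans <|
        Nat.add_le_add_left (card_union_le _ _) _) _) _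
  have hcover' := (Nat.cast_le (α := ℝ)).2 hcover
  push_cast at hcover'
  linarith

theorem card_filter_card_primeFactors_le_omegaBound {C : ℝ} (hR : 1 ≤ R)
    (hC : IsSmoothSumConstant (96 * log (2 * R) + 1 / 4) C) (hU : log X + C ≤ U)
    (hkU : k ≤ R * U) (hX : 2 ≤ X) (hN : N ≤ exp (32 * X)) {K : ℕ}
    (hK : K = ⌊exp (384 * log (2 * R) + 4)⌋₊) :
    (#{n ∈ Icc 1 N | #(n ^ 2 + 1).primeFactors = k} : ℝ) ≤
      (768 * (2 * R) ^ 192 + 6144) * omegaBound X U k +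
        (4 * K + 7) * exp (32 * X - 8 / K * X) := by
  have hl : 0 ≤ log (2 * R) := log_nonneg (by linarith)
  have hK4 : (4 : ℝ) ≤ K := by
    rw [hK]
    refine mod_cast Nat.le_floor (?_ : ((4 : ℕ) : ℝ) ≤ _)
    linarith [add_one_le_exp (384 * log (2 * R) + 4), Nat.cast_ofNat (R := ℝ) (n := 4)]
  have hδ : 8 / K * X ≤ 2 * X := by
    gcongr
    rw [div_le_iff₀ (by linarith)]
    linarith
  have hexp {c : ℝ} (hc : c ≤ 30) : exp (c * X) ≤ exp (32 * X - 8 / K * X) :=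
    exp_le_exp.2 (by nlinarith)
  have hsum : IsSmoothSumBound ⌊exp X⌋₊ 0 U :=
    (hC X 0 hX le_rfl (by norm_num) (by linarith)).mono hU
  have hsplit := card_splitSet_one_le hR hkU hX hN hsum
  have hdyadic := card_dyadicSplitSet_le hR hC hU hsum.nonneg hkU (by linarith) hN
  have hcount := card_filter_card_primeFactors_le (k := k) (κ := 384 * log (2 * R) + 4)
    (by linarith) (by linarith) hN
  rw [← hK, show 8 * X / K = 8 / K * X by ring] at hcount
  linarith [hexp (by norm_num : (8 : ℝ) ≤ 30), hexp (by norm_num : (22 : ℝ) ≤ 30),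
    hexp (by norm_num : (24 : ℝ) ≤ 30), hexp (by norm_num : (29 : ℝ) ≤ 30)]

theorem exists_card_le_omegaBound (hR : 1 ≤ R) : ∃ A, 0 < A ∧ ∃ B, 0 < B ∧
    ∀ᶠ X in Filter.atTop, ∀ N k : ℕ, N ≤ exp (32 * X) → k ≠ 0 → k ≤ R * log (32 * X) →
      (#{n ∈ Icc 1 N | #(n ^ 2 + 1).primeFactors = k} : ℝ) ≤
        A * omegaBound X (log (32 * X) + B) k := by
  obtain ⟨C, hC0, hC⟩ := exists_isSmoothSumConstant (96 * log (2 * R) + 1 / 4)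
  obtain ⟨K, hK⟩ : ∃ K, K = ⌊exp (384 * log (2 * R) + 4)⌋₊ := ⟨_, rfl⟩
  have hl : 0 ≤ log (2 * R) := log_nonneg (by linarith)
  have hK0 : 0 < K := hK ▸ Nat.floor_pos.2 (one_le_exp (by positivity))
  refine ⟨768 * (2 * R) ^ 192 + 6144 + 1, by positivity, C + 1, by positivity, ?_⟩
  filter_upwards [Filter.eventually_ge_atTop 2, eventually_const_mul_exp_le_omegaBound hR
    (by positivity : (0 : ℝ) < 8 / K) (by positivity : (0 : ℝ) ≤ 4 * K + 7)]
    with X hX herror N k hN hk0 hk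
  have hU : log X + C ≤ log (32 * X) + (C + 1) := by
    linarith [log_le_log (by linarith) (by linarith : X ≤ 32 * X)]
  have hkU : k ≤ R * (log (32 * X) + (C + 1)) := hk.trans (by gcongr; linarith)
  linarith [card_filter_card_primeFactors_le_omegaBound hR hC hU hkU hX hN hK,
    herror k (log (32 * X) + (C + 1)) hk0 hk (by linarith)]

end Assembly

/-- **Lemma 3.4** (special case of a result of Tenenbaum). Let `R > 0` be fixed. There
exist positive constants `A = A(R)` and `B = B(R)` such that for all sufficiently
large `x` and all `1 ≤ k ≤ R·log log x`,
`#{n ≤ x : ω(n²+1) = k} ≤ A·x·(log log x + B)^(k-1)/((k-1)!·log x)`. -/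
theorem count_omega_sq_add_one_eq (R : ℝ) (hR : 0 < R) :
    ∃ A : ℝ, 0 < A ∧ ∃ B : ℝ, 0 < B ∧ ∃ x₀ : ℝ, ∀ x : ℝ, x ≥ x₀ →
      ∀ k : ℕ, 1 ≤ k → (k : ℝ) ≤ R * Real.log (Real.log x) →
        (((Finset.Icc 1 ⌊x⌋₊).filter
            (fun n => (n ^ 2 + 1).primeFactors.card = k)).card : ℝ) ≤
          A * x * (Real.log (Real.log x) + B) ^ (k - 1) /
            ((Nat.factorial (k - 1)) * Real.log x) := by
  obtain ⟨A, hA, B, hB, hbound⟩ := exists_card_le_omegaBound (le_max_right R 1)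
  have hscale : Filter.Tendsto (fun x ↦ log x / 32) Filter.atTop Filter.atTop :=
    tendsto_log_atTop.atTop_div_const (by norm_num)
  obtain ⟨x₀, hx₀⟩ := Filter.eventually_atTop.1 <| (hscale.eventually hbound).and <|
    (tendsto_log_atTop.eventually_ge_atTop 1).and (Filter.eventually_gt_atTop 0)
  refine ⟨A, hA, B, hB, x₀, fun x hx k hk hkR ↦ ?_⟩
  obtain ⟨hbound, hlog, hx0⟩ := hx₀ x hx
  rw [mul_div_cancel₀ _ (by norm_num), exp_log hx0] at hbound
  have hloglog : 0 ≤ log (log x) := log_nonneg hlog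
  refine (hbound ⌊x⌋₊ k (Nat.floor_le hx0.le) (by omega) (hkR.trans ?_)).trans_eq ?_
  · gcongr
    exact le_max_left R 1
  · rw [omegaBound, mul_div_cancel₀ _ (by norm_num), exp_log hx0]
    field_simp
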